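/- arXiv:0804.0026 — 2 statements merged into one kernel-verified Lean document; each statement's English description precedes it below -/
import Mathlib

section
/- Each of the eight linear maps ξ_1,...,ξ_8 : ℝ² → V is a generic linear residual point of the root system of type F4; they lie in pairwise distinct W0-orbits (as generic linear residual points), and every generic linear residual point of F4 is W0-conjugate to exactly one of them. Moreover the regular parameter sets are: K^reg_{ξ1} = {(k1,k2) : (2k1+3k2)(3k1+4k2)(3k1+5k2)(5k1+6k2) ≠ 0}, K^reg_{ξ2} = {(k1² − 36k2²)·k2 ≠ 0}, K^reg_{ξ3} = {(3k1+2k2)(k1+3k2)(2k1+3k2)(3k1+4k2) ≠ 0}, K^reg_{ξ4} = {(2k1−3k2)(3k1−4k2)(3k1−5k2)(5k1−6k2) ≠ 0}, K^reg_{ξ5} = {(9k1² − 4k2²)(k1² − 9k2²) ≠ 0}, K^reg_{ξ6} = {(3k1−2k2)(k1−3k2)(2k1−3k2)(3k1−4k2) ≠ 0}, K^reg_{ξ7} = {(9k1² − k2²)·k1 ≠ 0}, and K^reg_{ξ8} = {k1·k2 ≠ 0}. -/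
open Classical

noncomputable section

namespace F4Res

/-- standard coordinate functional `e_i`, encoded as a coefficient vector -/
def ee (i : Fin 4) : Fin 4 → ℝ := fun t => if t = i then 1 else 0

/-- evaluation of a linear functional (given by its coefficient vector) at a point -/
def eval (α ξ : Fin 4 → ℝ) : ℝ := ∑ t, α t * ξ t

/-- the root system of type `F4` in `ℝ⁴`:  the long roots `±e_i ± e_j` (`i < j`) and the
short roots `±e_i` and `(±e_1 ± e_2 ± e_3 ± e_4)/2` -/
def roots : Set (Fin 4 → ℝ) :=
  {α | (∃ i j : Fin 4, i < j ∧ ∃ ε₁ ε₂ : ℝ, (ε₁ = 1 ∨ ε₁ = -1) ∧ (ε₂ = 1 ∨ ε₂ = -1) ∧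
          α = ε₁ • ee i + ε₂ • ee j) ∨
       (∃ i : Fin 4, ∃ ε : ℝ, (ε = 1 ∨ ε = -1) ∧ α = ε • ee i) ∨
       (∃ ε : Fin 4 → ℝ, (∀ t, ε t = 1 ∨ ε t = -1) ∧ α = fun t => ε t / 2)}

/-- the short roots are the roots of squared length `1` -/
def isShort (α : Fin 4 → ℝ) : Prop := ∑ t, α t ^ 2 = 1

/-- the parameter function with value `k1` on the long roots and `k2` on the short
roots -/
def par (k1 k2 : ℝ) (α : Fin 4 → ℝ) : ℝ := if isShort α then k2 else k1

/-- `ξ` is a linear `(F4,(k1,k2))`-residual point -/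
def IsResidual (k1 k2 : ℝ) (ξ : Fin 4 → ℝ) : Prop :=
  {α ∈ roots | eval α ξ = par k1 k2 α}.ncard = {α ∈ roots | eval α ξ = 0}.ncard + 4

/-- a linear map `ξ : ℝ² → ℝ⁴` is a generic linear residual point of type `F4` -/
def IsGenericResidual (ξ : (ℝ × ℝ) →ₗ[ℝ] (Fin 4 → ℝ)) : Prop :=
  ∃ U : Set (ℝ × ℝ), IsOpen U ∧ Dense U ∧ ∀ k ∈ U, IsResidual k.1 k.2 (ξ k)

/-- the orthogonal reflection of `ℝ⁴` in the hyperplane perpendicular to `α` -/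
def reflectBy (α : Fin 4 → ℝ) : (Fin 4 → ℝ) → (Fin 4 → ℝ) :=
  fun v => v - (2 * eval α v / eval α α) • α

/-- `f` belongs to the Weyl group `W0` of `F4`, i.e. `f` is a composition of
reflections in the roots -/
def InWeyl (f : (Fin 4 → ℝ) → (Fin 4 → ℝ)) : Prop :=
  ∃ L : List (Fin 4 → ℝ), (∀ α ∈ L, α ∈ roots) ∧
    f = L.foldr (fun α g => reflectBy α ∘ g) id

/-- two generic linear residual points lie in the same `W0`-orbit (for the action of
`W0` by postcomposition) -/
def GenSameOrbit (ξ η : (ℝ × ℝ) →ₗ[ℝ] (Fin 4 → ℝ)) : Prop :=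
  ∃ f, InWeyl f ∧ ∀ k, η k = f (ξ k)

/-- a basis of simple roots `(α1,α2,α3,α4)` of `F4` with `α1,α2` long, `α3,α4` short
and `α2(α3∨) = −2`:  `α1 = e2−e3`, `α2 = e3−e4`, `α3 = e4`,
`α4 = (e1−e2−e3−e4)/2` -/
def simple : Fin 4 → (Fin 4 → ℝ) :=
  ![![0, 1, -1, 0], ![0, 0, 1, -1], ![0, 0, 0, 1], ![1/2, -1/2, -1/2, -1/2]]

/-- the vectors of values `(α1(ξ_i),...,α4(ξ_i))` of the eight generic linear residual
points `ξ_1,...,ξ_8` of `F4` -/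
def vals : Fin 8 → (ℝ × ℝ) → (Fin 4 → ℝ) :=
  ![fun k => ![k.1, k.1, k.2, k.2],
    fun k => ![k.1, k.1, k.2 - k.1, k.2],
    fun k => ![k.1, k.1, k.2 - k.1, k.1],
    fun k => ![k.1, k.1, k.2 - 2 * k.1, k.2],
    fun k => ![k.1, k.1, k.2 - 2 * k.1, 2 * k.1],
    fun k => ![k.1, k.1, k.2 - 2 * k.1, k.1],
    fun k => ![k.1, k.1, k.2 - 2 * k.1, -2 * k.2],
    fun k => ![0, k.1, 0, k.2 - k.1]]

/-- the regular parameter conditions defining `K^reg_{ξ_1},...,K^reg_{ξ_8}` -/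
def regCond : Fin 8 → ℝ → ℝ → Prop :=
  ![fun k1 k2 => (2*k1 + 3*k2) * (3*k1 + 4*k2) * (3*k1 + 5*k2) * (5*k1 + 6*k2) ≠ 0,
    fun k1 k2 => (k1 ^ 2 - 36 * k2 ^ 2) * k2 ≠ 0,
    fun k1 k2 => (3*k1 + 2*k2) * (k1 + 3*k2) * (2*k1 + 3*k2) * (3*k1 + 4*k2) ≠ 0,
    fun k1 k2 => (2*k1 - 3*k2) * (3*k1 - 4*k2) * (3*k1 - 5*k2) * (5*k1 - 6*k2) ≠ 0,
    fun k1 k2 => (9 * k1 ^ 2 - 4 * k2 ^ 2) * (k1 ^ 2 - 9 * k2 ^ 2) ≠ 0,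
    fun k1 k2 => (3*k1 - 2*k2) * (k1 - 3*k2) * (2*k1 - 3*k2) * (3*k1 - 4*k2) ≠ 0,
    fun k1 k2 => (9 * k1 ^ 2 - k2 ^ 2) * k1 ≠ 0,
    fun k1 k2 => k1 * k2 ≠ 0]

/-- integer coordinates of a root with respect to the simple roots -/
abbrev C := ℤ × ℤ × ℤ × ℤ

def Q (c : C) : ℤ :=
  2*c.1*c.1 + 2*c.2.1*c.2.1 + c.2.2.1*c.2.2.1 + c.2.2.2*c.2.2.2
    - 2*c.1*c.2.1 - 2*c.2.1*c.2.2.1 - c.2.2.1*c.2.2.2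

/-- the positive roots -/
def pos : List C :=
  [(2, 3, 4, 2), (1, 3, 4, 2), (1, 2, 4, 2), (1, 2, 3, 2), (1, 2, 2, 2), (1, 2, 3, 1),
   (1, 1, 2, 2), (1, 2, 2, 1), (0, 1, 2, 2), (1, 1, 2, 1), (1, 2, 2, 0), (0, 1, 2, 1),
   (1, 1, 1, 1), (1, 1, 2, 0), (0, 1, 1, 1), (0, 1, 2, 0), (1, 1, 1, 0), (0, 0, 1, 1),
   (0, 1, 1, 0), (1, 1, 0, 0), (0, 0, 0, 1), (0, 0, 1, 0), (0, 1, 0, 0), (1, 0, 0, 0)]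

def isZ : ℤ → Bool
  | .ofNat 0 => true
  | .ofNat (.succ _) => false
  | .negSucc _ => false

def isNeg : ℤ → Bool
  | .ofNat _ => false
  | .negSucc _ => true

def isShortZ (c : C) : Bool := isZ (Q c - 1)

/-- evaluation barrier: forces an integer to a numeral before it is used -/
def force (n : ℤ) (f : ℤ → Bool) : Bool :=
  match n with
  | .ofNat 0 => f (.ofNat 0)
  | .ofNat (.succ m) => f (.ofNat (.succ m))
  | .negSucc 0 => f (.negSucc 0)
  | .negSucc (.succ m) => f (.negSucc (.succ m))

/-- a partially eliminated linear equation for the value of the root `c` -/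
structure Row where
  c : C
  s : Bool
  x1 : ℤ
  x2 : ℤ
  x3 : ℤ
  x4 : ℤ
  p : ℤ
  q : ℤ

def Row.coef (r : Row) : Fin 4 → ℤ
  | 0 => r.x1
  | 1 => r.x2
  | 2 => r.x3
  | 3 => r.x4

def Row.piv (r : Row) : Fin 4 :=
  if isZ r.x1 then (if isZ r.x2 then (if isZ r.x3 then 3 else 2) else 1) else 0

def ka (s : Bool) (D : ℤ) : ℤ := match s with | true => 0 | false => D
def kb (s : Bool) (D : ℤ) : ℤ := match s with | true => D | false => 0

def lin (X Y a b : ℤ) : ℤ := Int.sub (Int.mul X a) (Int.mul Y b)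

/-- `X * r - Y * b` -/
def comb (X Y : ℤ) (r b : Row) : Row :=
  ⟨r.c, r.s, lin X Y r.x1 b.x1, lin X Y r.x2 b.x2, lin X Y r.x3 b.x3,
    lin X Y r.x4 b.x4, lin X Y r.p b.p, lin X Y r.q b.q⟩

def Row.force (r : Row) (f : Row → Bool) : Bool :=
  match r with
  | ⟨c, s, x1, x2, x3, x4, p, q⟩ =>
    F4Res.force x1 fun x1 => F4Res.force x2 fun x2 => F4Res.force x3 fun x3 =>
    F4Res.force x4 fun x4 => F4Res.force p fun p => F4Res.force q fun q =>
    f ⟨c, s, x1, x2, x3, x4, p, q⟩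

def Row.det (r : Row) : Bool := isZ r.x1 && isZ r.x2 && isZ r.x3 && isZ r.x4
def Row.inP (r : Row) (D : ℤ) : Bool := isZ (r.p - ka r.s D) && isZ (r.q - kb r.s D)
def Row.inZ (r : Row) : Bool := isZ r.p && isZ r.q
def Row.neg (r : Row) (D : ℤ) : Bool := isNeg ((r.p + 10 * r.q) * D)

/-- eliminate with the pivot row `b` (coordinate `j`, pivot `X`, new denominator `D`) from all
rows of a list; `e` tells whether these rows are excluded from `P`;
returns `true` as soon as a contradiction is found -/
def step (b : Row) (j : Fin 4) (X D : ℤ) (e : Bool) :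
    List Row → ℕ → ℕ → (List Row → ℕ → ℕ → Bool) → Bool
  | [], nP, nZ, k => k [] nP nZ
  | r :: rs, nP, nZ, k =>
    (comb X (r.coef j) r b).force fun r' =>
      cond r'.det
        (cond (r'.inP D)
          (cond e true (step b j X D e rs nP.succ nZ k))
          (cond r'.inZ (step b j X D e rs nP nZ.succ k)
            (cond (r'.neg D) true (step b j X D e rs nP nZ k))))
        (step b j X D e rs nP nZ fun l a z => k (r' :: l) a z)

/-- the eight dominant solutions -/
def sol : List (ℤ × ℤ × ℤ × ℤ × ℤ × ℤ × ℤ × ℤ) :=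
  [(1,0,1,0,0,1,0,1), (1,0,1,0,-1,1,0,1), (1,0,1,0,-1,1,1,0), (1,0,1,0,-2,1,0,1),
   (1,0,1,0,-2,1,2,0), (1,0,1,0,-2,1,1,0), (1,0,1,0,1,0,-3,1), (0,0,1,0,0,0,-1,1)]

def Row.is (r : Row) (D p q : ℤ) : Bool := r.det && isZ (r.p - D * p) && isZ (r.q - D * q)

def leaf (D : ℤ) (sr : Row × Row × Row × Row) : Bool :=
  sol.any fun t => sr.1.is D t.1 t.2.1 && sr.2.1.is D t.2.2.1 t.2.2.2.1 &&
    sr.2.2.1.is D t.2.2.2.2.1 t.2.2.2.2.2.1 &&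
    sr.2.2.2.is D t.2.2.2.2.2.2.1 t.2.2.2.2.2.2.2

def Row.shift (r : Row) (D : ℤ) : Row :=
  ⟨r.c, r.s, r.x1, r.x2, r.x3, r.x4, r.p - ka r.s D, r.q - kb r.s D⟩

def goAux (ih : ℤ → Row × Row × Row × Row → List Row → List Row → ℕ → ℕ → Bool) (D : ℤ)
    (sr : Row × Row × Row × Row) (pend exc : List Row) (nP nZ : ℕ) : Bool :=
  match pend with
  | [] => Nat.blt nP (2 * nZ + 4) || (exc.isEmpty && !(Nat.beq nP (2 * nZ + 4))) || leaf D sr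
  | r :: rest =>
    ih D sr rest (r :: exc) nP nZ &&
    (r.shift D).force fun b =>
      force (b.coef b.piv) fun X => force (D * X) fun D' =>
        !(isZ X) &&
        step b b.piv X D' false rest nP.succ nZ fun pend' nP' nZ' =>
          step b b.piv X D' true exc nP' nZ' fun exc' nP'' nZ'' =>
            ih D' (comb X (sr.1.coef b.piv) sr.1 b, comb X (sr.2.1.coef b.piv) sr.2.1 b,
              comb X (sr.2.2.1.coef b.piv) sr.2.2.1 b, comb X (sr.2.2.2.coef b.piv) sr.2.2.2 b)
              pend' exc' nP'' nZ''

/-- the search: `pend` are the undecided rows, `exc` the rows decided not to be in `P` -/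
def go : ℕ → ℤ → Row × Row × Row × Row → List Row → List Row → ℕ → ℕ → Bool
  | 0, _, _, _, _, _, _ => false
  | .succ n, D, sr, pend, exc, nP, nZ =>
    Nat.blt (Nat.add nP pend.length) (Nat.add (Nat.mul 2 nZ) 4) ||
    goAux (go n) D sr pend exc nP nZ

def row0 (c : C) : Row := ⟨c, isShortZ c, c.1, c.2.1, c.2.2.1, c.2.2.2, 0, 0⟩

def row1 (s : Bool) (a b c d : ℕ) : Row :=
  ⟨(.ofNat a, .ofNat b, .ofNat c, .ofNat d), s, .ofNat a, .ofNat b, .ofNat c, .ofNat d, .ofNat 0, .ofNat 0⟩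

def rows0 : List Row :=
  [row1 false 2 3 4 2, row1 false 1 3 4 2, row1 false 1 2 4 2, row1 true 1 2 3 2,
   row1 false 1 2 2 2, row1 true 1 2 3 1, row1 false 1 1 2 2, row1 true 1 2 2 1,
   row1 false 0 1 2 2, row1 true 1 1 2 1, row1 false 1 2 2 0, row1 true 0 1 2 1,
   row1 true 1 1 1 1, row1 false 1 1 2 0, row1 true 0 1 1 1, row1 false 0 1 2 0,
   row1 true 1 1 1 0, row1 true 0 0 1 1, row1 true 0 1 1 0, row1 false 1 1 0 0,
   row1 true 0 0 0 1, row1 true 0 0 1 0, row1 false 0 1 0 0, row1 false 1 0 0 0]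

def sr0 : Row × Row × Row × Row :=
  (row0 (1,0,0,0), row0 (0,1,0,0), row0 (0,0,1,0), row0 (0,0,0,1))
theorem isZ_iff (n : ℤ) : isZ n = true ↔ n = 0 := by
  rcases n with (_ | n) | n <;> simp [isZ]
  omega

theorem isNeg_iff (n : ℤ) : isNeg n = true ↔ n < 0 := by
  rcases n with n | n <;> simp [isNeg]

theorem force_eq (n : ℤ) (f : ℤ → Bool) : force n f = f n := by
  rcases n with (_ | n) | (_ | n) <;> rfl

theorem Row.force_eq (r : Row) (f : Row → Bool) : r.force f = f r := by
  simp only [Row.force, F4Res.force_eq]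

/-- value of the root `c` at the point with simple root values `a` -/
def va (c : C) (a : Fin 4 → ℝ) : ℝ :=
  c.1 * a 0 + c.2.1 * a 1 + c.2.2.1 * a 2 + c.2.2.2 * a 3

def Row.ev (r : Row) (a : Fin 4 → ℝ) : ℝ := r.x1 * a 0 + r.x2 * a 1 + r.x3 * a 2 + r.x4 * a 3

def Good (a b : Fin 4 → ℝ) (D : ℤ) (r : Row) : Prop :=
  D * va r.c a = r.ev a + r.p ∧ D * va r.c b = r.ev b + r.q

def PP (a b : Fin 4 → ℝ) (c : C) (s : Bool) : Prop :=
  va c a = ka s 1 ∧ va c b = kb s 1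

def ZZ (a b : Fin 4 → ℝ) (c : C) : Prop := va c a = 0 ∧ va c b = 0

def OK (a b : Fin 4 → ℝ) (D : ℤ) (r : Row) : Prop :=
  Good a b D r ∧ 0 ≤ va r.c a + 10 * va r.c b

def cP (a b : Fin 4 → ℝ) (l : List Row) : ℕ := l.countP fun r => decide (PP a b r.c r.s)
def cZ (a b : Fin 4 → ℝ) (l : List Row) : ℕ := l.countP fun r => decide (ZZ a b r.c)

theorem cP_cons (a b : Fin 4 → ℝ) (r : Row) (l : List Row) :
    cP a b (r :: l) = cP a b l + if PP a b r.c r.s then 1 else 0 := by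
  simp [cP, List.countP_cons]

theorem cZ_cons (a b : Fin 4 → ℝ) (r : Row) (l : List Row) :
    cZ a b (r :: l) = cZ a b l + if ZZ a b r.c then 1 else 0 := by
  simp [cZ, List.countP_cons]

theorem ka_mul (s : Bool) (D : ℤ) : ka s D = D * ka s 1 := by cases s <;> simp [ka]
theorem kb_mul (s : Bool) (D : ℤ) : kb s D = D * kb s 1 := by cases s <;> simp [kb]

theorem not_PP_ZZ {a b : Fin 4 → ℝ} {c : C} {s : Bool} (h : PP a b c s) : ¬ ZZ a b c := by
  rintro ⟨h1, h2⟩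
  obtain ⟨h3, h4⟩ := h
  rw [h1] at h3
  rw [h2] at h4
  cases s <;> simp [ka, kb] at h3 h4

theorem good_comb {a b : Fin 4 → ℝ} {D X Y : ℤ} {r w : Row} (h : Good a b D r)
    (hw : w.ev a + w.p = 0 ∧ w.ev b + w.q = 0) : Good a b (D * X) (comb X Y r w) := by
  obtain ⟨h1, h2⟩ := h
  obtain ⟨h3, h4⟩ := hw
  simp only [Row.ev] at h1 h2 h3 h4
  have e : ∀ u v : ℤ, lin X Y u v = X * u - Y * v := fun u v => rfl
  constructor
  · simp only [comb, Row.ev, e]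
    push_cast
    linear_combination X * h1 + Y * h3
  · simp only [comb, Row.ev, e]
    push_cast
    linear_combination X * h2 + Y * h4

theorem det_ev {r : Row} (h : r.det = true) (a : Fin 4 → ℝ) : r.ev a = 0 := by
  simp only [Row.det, Bool.and_eq_true, isZ_iff] at h
  simp [Row.ev, h.1.1.1, h.1.1.2, h.1.2, h.2]

theorem inP_iff {a b : Fin 4 → ℝ} {D : ℤ} {r : Row} (hD : D ≠ 0) (h : Good a b D r)
    (hd : r.det = true) : r.inP D = true ↔ PP a b r.c r.s := by
  obtain ⟨h1, h2⟩ := h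
  rw [det_ev hd, zero_add] at h1 h2
  have hD' : (D : ℝ) ≠ 0 := by exact_mod_cast hD
  simp only [Row.inP, Bool.and_eq_true, isZ_iff, PP, sub_eq_zero]
  rw [ka_mul, kb_mul]
  have e1 : r.p = D * ka r.s 1 ↔ va r.c a = ka r.s 1 := by
    rw [← mul_right_inj' hD', h1]
    exact_mod_cast Iff.rfl
  have e2 : r.q = D * kb r.s 1 ↔ va r.c b = kb r.s 1 := by
    rw [← mul_right_inj' hD', h2]
    exact_mod_cast Iff.rfl
  rw [e1, e2]

theorem inZ_iff {a b : Fin 4 → ℝ} {D : ℤ} {r : Row} (hD : D ≠ 0) (h : Good a b D r)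
    (hd : r.det = true) : r.inZ = true ↔ ZZ a b r.c := by
  obtain ⟨h1, h2⟩ := h
  rw [det_ev hd, zero_add] at h1 h2
  have hD' : (D : ℝ) ≠ 0 := by exact_mod_cast hD
  simp only [Row.inZ, Bool.and_eq_true, isZ_iff, ZZ]
  have e1 : r.p = 0 ↔ va r.c a = 0 := by
    rw [← mul_right_inj' hD', h1, mul_zero]
    exact_mod_cast Iff.rfl
  have e2 : r.q = 0 ↔ va r.c b = 0 := by
    rw [← mul_right_inj' hD', h2, mul_zero]
    exact_mod_cast Iff.rfl
  rw [e1, e2]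

theorem neg_false {a b : Fin 4 → ℝ} {D : ℤ} {r : Row} (h : OK a b D r)
    (hd : r.det = true) : r.neg D = false := by
  obtain ⟨⟨h1, h2⟩, h3⟩ := h
  rw [det_ev hd, zero_add] at h1 h2
  by_contra hc
  rw [Bool.not_eq_false, Row.neg, isNeg_iff] at hc
  have hc' : (((r.p : ℝ) + 10 * r.q) * D) < 0 := by exact_mod_cast hc
  rw [← h1, ← h2] at hc'
  nlinarith [mul_nonneg (mul_self_nonneg (D : ℝ)) h3]

theorem step_sound (a b : Fin 4 → ℝ) (w : Row) (j : Fin 4) (X D : ℤ) (e : Bool)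
    (hD : D * X ≠ 0) (hw : w.ev a + w.p = 0 ∧ w.ev b + w.q = 0) (l : List Row) :
    ∀ (nP nZ : ℕ) (k : List Row → ℕ → ℕ → Bool), (∀ r ∈ l, OK a b D r) →
      (e = true → ∀ r ∈ l, ¬ PP a b r.c r.s) → step w j X (D * X) e l nP nZ k = true →
      ∃ l' nP' nZ', k l' nP' nZ' = true ∧ (∀ r ∈ l', OK a b (D * X) r) ∧
        (e = true → ∀ r ∈ l', ¬ PP a b r.c r.s) ∧
        nP' + cP a b l' = nP + cP a b l ∧ nZ' + cZ a b l' = nZ + cZ a b l := by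
  induction l with
  | nil =>
    intro nP nZ k _ _ h
    exact ⟨[], nP, nZ, h, by simp, by simp, rfl, rfl⟩
  | cons r rs ih =>
    intro nP nZ k hok hex h
    have hr := hok r (by simp)
    have hrs : ∀ r ∈ rs, OK a b D r := fun r hr => hok r (by simp [hr])
    have hex' : e = true → ∀ r ∈ rs, ¬ PP a b r.c r.s := fun he r hr => hex he r (by simp [hr])
    rw [step, Row.force_eq] at h
    set r' := comb X (r.coef j) r w with hr'
    have hg : Good a b (D * X) r' := good_comb hr.1 hw
    have hok' : OK a b (D * X) r' := ⟨hg, hr.2⟩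
    have hc : r'.c = r.c := rfl
    have hs : r'.s = r.s := rfl
    rw [cP_cons, cZ_cons]
    cases hd : r'.det with
    | false =>
      rw [hd, cond_false] at h
      obtain ⟨l', nP', nZ', h1, h2, h3, h4, h5⟩ := ih nP nZ _ hrs hex' h
      refine ⟨r' :: l', nP', nZ', h1, ?_, ?_, ?_, ?_⟩
      · intro x hx
        rcases List.mem_cons.1 hx with rfl | hx
        · exact hok'
        · exact h2 x hx
      · intro he x hx
        rcases List.mem_cons.1 hx with rfl | hx
        · exact hex he r (by simp)
        · exact h3 he x hx
      · rw [cP_cons, hc, hs]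
        omega
      · rw [cZ_cons, hc]
        omega
    | true =>
      rw [hd, cond_true] at h
      have hP := inP_iff hD hg hd
      have hZ := inZ_iff hD hg hd
      rw [hc, hs] at hP
      rw [hc] at hZ
      cases hp : r'.inP (D * X) with
      | true =>
        rw [hp, cond_true] at h
        have hPP := hP.1 hp
        cases e with
        | true => exact absurd hPP (hex rfl r (by simp))
        | false =>
          rw [cond_false] at h
          obtain ⟨l', nP', nZ', h1, h2, h3, h4, h5⟩ := ih _ _ _ hrs hex' h
          refine ⟨l', nP', nZ', h1, h2, h3, ?_, ?_⟩
          · rw [if_pos hPP]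
            omega
          · rw [if_neg (not_PP_ZZ hPP)]
            omega
      | false =>
        rw [hp, cond_false] at h
        have hPP : ¬ PP a b r.c r.s := by
          rw [← hP, hp]
          simp
        rw [if_neg hPP]
        cases hz : r'.inZ with
        | true =>
          rw [hz, cond_true] at h
          obtain ⟨l', nP', nZ', h1, h2, h3, h4, h5⟩ := ih _ _ _ hrs hex' h
          refine ⟨l', nP', nZ', h1, h2, h3, ?_, ?_⟩
          · omega
          · rw [if_pos (hZ.1 hz)]
            omega
        | false =>
          have hZZ : ¬ ZZ a b r.c := by
            rw [← hZ, hz]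
            simp
          rw [hz, cond_false, neg_false hok' hd, cond_false] at h
          obtain ⟨l', nP', nZ', h1, h2, h3, h4, h5⟩ := ih _ _ _ hrs hex' h
          refine ⟨l', nP', nZ', h1, h2, h3, ?_, ?_⟩
          · omega
          · rw [if_neg hZZ]
            omega

def Match (a b : Fin 4 → ℝ) (t : ℤ × ℤ × ℤ × ℤ × ℤ × ℤ × ℤ × ℤ) : Prop :=
  (a 0 = t.1 ∧ b 0 = t.2.1) ∧ (a 1 = t.2.2.1 ∧ b 1 = t.2.2.2.1) ∧
  (a 2 = t.2.2.2.2.1 ∧ b 2 = t.2.2.2.2.2.1) ∧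
  (a 3 = t.2.2.2.2.2.2.1 ∧ b 3 = t.2.2.2.2.2.2.2)

theorem is_sound {a b : Fin 4 → ℝ} {D p q : ℤ} {r : Row} (hD : D ≠ 0) (h : Good a b D r)
    (hi : r.is D p q = true) : va r.c a = p ∧ va r.c b = q := by
  simp only [Row.is, Bool.and_eq_true, isZ_iff, sub_eq_zero] at hi
  obtain ⟨⟨hd, h1⟩, h2⟩ := hi
  obtain ⟨h3, h4⟩ := h
  rw [det_ev hd, zero_add] at h3 h4
  have hD' : (D : ℝ) ≠ 0 := by exact_mod_cast hD
  rw [← mul_right_inj' hD', ← mul_right_inj' (b := va r.c b) hD', h3, h4, h1, h2]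
  push_cast
  exact ⟨rfl, rfl⟩

/-- the four rows kept for the simple roots -/
def SR (a b : Fin 4 → ℝ) (D : ℤ) (sr : Row × Row × Row × Row) : Prop :=
  (Good a b D sr.1 ∧ sr.1.c = (1,0,0,0)) ∧ (Good a b D sr.2.1 ∧ sr.2.1.c = (0,1,0,0)) ∧
  (Good a b D sr.2.2.1 ∧ sr.2.2.1.c = (0,0,1,0)) ∧ (Good a b D sr.2.2.2 ∧ sr.2.2.2.c = (0,0,0,1))

theorem leaf_sound {a b : Fin 4 → ℝ} {D : ℤ} {sr : Row × Row × Row × Row} (hD : D ≠ 0)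
    (h : SR a b D sr) (hl : leaf D sr = true) : ∃ t ∈ sol, Match a b t := by
  rw [leaf, List.any_eq_true] at hl
  obtain ⟨t, ht, h1⟩ := hl
  refine ⟨t, ht, ?_⟩
  simp only [Bool.and_eq_true] at h1
  obtain ⟨⟨⟨i1, i2⟩, i3⟩, i4⟩ := h1
  obtain ⟨⟨g1, c1⟩, ⟨g2, c2⟩, ⟨g3, c3⟩, ⟨g4, c4⟩⟩ := h
  have j1 := is_sound hD g1 i1
  have j2 := is_sound hD g2 i2
  have j3 := is_sound hD g3 i3
  have j4 := is_sound hD g4 i4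
  rw [c1] at j1
  rw [c2] at j2
  rw [c3] at j3
  rw [c4] at j4
  simp [va] at j1 j2 j3 j4
  exact ⟨j1, j2, j3, j4⟩

theorem go_sound (a b : Fin 4 → ℝ) (n : ℕ) :
    ∀ (D : ℤ) (sr : Row × Row × Row × Row) (pend exc : List Row) (nP nZ : ℕ), D ≠ 0 →
      SR a b D sr → (∀ r ∈ pend, OK a b D r) → (∀ r ∈ exc, OK a b D r) →
      (∀ r ∈ exc, ¬ PP a b r.c r.s) →
      nP + cP a b pend = 2 * (nZ + cZ a b pend + cZ a b exc) + 4 →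
      go n D sr pend exc nP nZ = true → ∃ t ∈ sol, Match a b t := by
  induction n with
  | zero =>
    intro D sr pend exc nP nZ _ _ _ _ _ _ h
    simp [go] at h
  | succ n ih =>
    intro D sr pend exc nP nZ hD hsr hp he hne hcount h
    have h : (Nat.blt (Nat.add nP pend.length) (Nat.add (Nat.mul 2 nZ) 4) ||
      goAux (go n) D sr pend exc nP nZ) = true := h
    rw [Bool.or_eq_true] at h
    have hlen : cP a b pend ≤ pend.length := List.countP_le_length
    rcases h with h | h
    · exfalso
      have h' : nP + pend.length < 2 * nZ + 4 := by simpa [Nat.blt_eq] using h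
      omega
    cases pend with
    | nil =>
      simp only [goAux, Bool.or_eq_true, Bool.and_eq_true, Nat.blt_eq, List.isEmpty_iff,
        Bool.not_eq_true'] at h
      have e1 : cP a b [] = 0 := rfl
      have e2 : cZ a b [] = 0 := rfl
      rcases h with (h | ⟨h1, h2⟩) | h
      · omega
      · subst h1
        exfalso
        have h3 : nP ≠ 2 * nZ + 4 := by
          rintro rfl
          simp at h2
        omega
      · exact leaf_sound hD hsr h
    | cons r rest =>
      simp only [goAux, Row.force_eq, force_eq, Bool.and_eq_true, Bool.not_eq_true'] at h
      obtain ⟨h1, hX, h2⟩ := h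
      have hr := hp r (by simp)
      have hrest : ∀ r ∈ rest, OK a b D r := fun r hr => hp r (by simp [hr])
      rw [cP_cons, cZ_cons] at hcount
      by_cases hP : PP a b r.c r.s
      · set w := r.shift D with hw
        have hX0 : w.coef w.piv ≠ 0 := by
          intro h0
          rw [h0] at hX
          simp [isZ] at hX
        set X := w.coef w.piv with hXdef
        have hDX : D * X ≠ 0 := mul_ne_zero hD hX0
        have hw0 : w.ev a + w.p = 0 ∧ w.ev b + w.q = 0 := by
          obtain ⟨⟨g1, g2⟩, _⟩ := hr
          obtain ⟨p1, p2⟩ := hP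
          rw [p1] at g1
          rw [p2] at g2
          simp only [hw, Row.shift, Row.ev] at g1 g2 ⊢
          rw [ka_mul, kb_mul]
          push_cast
          constructor
          · linear_combination -g1
          · linear_combination -g2
        rw [if_pos hP, if_neg (not_PP_ZZ hP)] at hcount
        obtain ⟨l1, P1, Z1, h3, k1, k2, k3, k4⟩ :=
          step_sound a b w w.piv X D false hDX hw0 rest _ _ _ hrest (by simp) h2
        obtain ⟨l2, P2, Z2, h4, k5, k6, k7, k8⟩ :=
          step_sound a b w w.piv X D true hDX hw0 exc _ _ _ he (fun _ => hne) h3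
        have z1 : cP a b exc = 0 := by
          rw [cP, List.countP_eq_zero]
          simpa using hne
        have z2 : cP a b l2 = 0 := by
          rw [cP, List.countP_eq_zero]
          simpa using k6 rfl
        refine ih (D * X) _ l1 l2 P2 Z2 hDX ?_ k1 k5 (k6 rfl) (by omega) h4
        obtain ⟨⟨g1, c1⟩, ⟨g2, c2⟩, ⟨g3, c3⟩, ⟨g4, c4⟩⟩ := hsr
        exact ⟨⟨good_comb g1 hw0, c1⟩, ⟨good_comb g2 hw0, c2⟩, ⟨good_comb g3 hw0, c3⟩,
          ⟨good_comb g4 hw0, c4⟩⟩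
      · rw [if_neg hP] at hcount
        refine ih D sr rest (r :: exc) nP nZ hD hsr hrest ?_ ?_ ?_ h1
        · intro x hx
          rcases List.mem_cons.1 hx with rfl | hx
          · exact hr
          · exact he x hx
        · intro x hx
          rcases List.mem_cons.1 hx with rfl | hx
          · exact hP
          · exact hne x hx
        · rw [cZ_cons]
          omega

theorem rows0_eq : rows0 = pos.map row0 := by rfl

set_option maxRecDepth 100000 in
set_option maxHeartbeats 0 in
theorem go_true : go 30 1 sr0 rows0 [] 0 0 = true := by decide +kernel

/-! ### geometry -/

def neg4 (c : C) : C := (-c.1, -c.2.1, -c.2.2.1, -c.2.2.2)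

def L48 : List C := pos ++ pos.map neg4

def toV (c : C) : Fin 4 → ℝ :=
  ![c.2.2.2 / 2, c.1 - c.2.2.2 / 2, -c.1 + c.2.1 - c.2.2.2 / 2, -c.2.1 + c.2.2.1 - c.2.2.2 / 2]

/-- the simple root values of a point -/
def sv (x : Fin 4 → ℝ) : Fin 4 → ℝ := fun j => eval (simple j) x

theorem eval_toV (c : C) (x : Fin 4 → ℝ) : eval (toV c) x = va c (sv x) := by
  simp [eval, toV, va, sv, simple, Fin.sum_univ_four]
  ring

theorem toV_inj : Function.Injective toV := by
  rintro ⟨c1, c2, c3, c4⟩ ⟨d1, d2, d3, d4⟩ h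
  have h0 := congrFun h 0
  have h1 := congrFun h 1
  have h2 := congrFun h 2
  have h3 := congrFun h 3
  simp [toV] at h0 h1 h2 h3
  subst h0
  have e1 : (c1 : ℝ) = d1 := by linarith
  have e2 : (c2 : ℝ) = d2 := by linarith
  have e3 : (c3 : ℝ) = d3 := by linarith
  norm_cast at e1 e2 e3
  subst e1 e2 e3
  rfl

/-- the simple root coordinates of the `e_i` -/
def E : Fin 4 → C := ![(1,2,3,2), (1,1,1,0), (0,1,1,0), (0,0,1,0)]

def lc (e : ℤ) (c : C) (f : ℤ) (d : C) : C :=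
  (e * c.1 + f * d.1, e * c.2.1 + f * d.2.1, e * c.2.2.1 + f * d.2.2.1,
    e * c.2.2.2 + f * d.2.2.2)

theorem toV_lc (e f : ℤ) (c d : C) : toV (lc e c f d) = (e : ℝ) • toV c + (f : ℝ) • toV d := by
  funext t
  fin_cases t <;> simp [toV, lc] <;> ring

theorem toV_E (i : Fin 4) : toV (E i) = ee i := by
  funext t
  fin_cases i <;> fin_cases t <;> simp [toV, E, ee] <;> norm_num

def sgn : List ℤ := [1, -1]

theorem sgn_iff (e : ℤ) : e ∈ sgn ↔ e = 1 ∨ e = -1 := by simp [sgn]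

theorem sgn_real {e : ℝ} (h : e = 1 ∨ e = -1) : ∃ z ∈ sgn, e = (z : ℝ) := by
  rcases h with rfl | rfl
  · exact ⟨1, by simp [sgn], by simp⟩
  · exact ⟨-1, by simp [sgn], by simp⟩

theorem real_sgn {z : ℤ} (h : z ∈ sgn) : (z : ℝ) = 1 ∨ (z : ℝ) = -1 := by
  rcases (sgn_iff z).1 h with rfl | rfl <;> simp

def half (s0 s1 s2 s3 : ℤ) : C := ((s1+s0)/2, (s2+s1+2*s0)/2, (s3+s2+s1+3*s0)/2, s0)

theorem long_mem : ∀ i j : Fin 4, i < j → ∀ e ∈ sgn, ∀ f ∈ sgn, lc e (E i) f (E j) ∈ L48 := by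
  decide +kernel

theorem short_mem : ∀ i : Fin 4, ∀ e ∈ sgn, lc e (E i) 0 (E i) ∈ L48 := by
  decide +kernel

theorem half_mem : ∀ s0 ∈ sgn, ∀ s1 ∈ sgn, ∀ s2 ∈ sgn, ∀ s3 ∈ sgn, half s0 s1 s2 s3 ∈ L48 := by
  decide +kernel

theorem mem_cases : ∀ c ∈ L48,
    (∃ i j : Fin 4, i < j ∧ ∃ e ∈ sgn, ∃ f ∈ sgn, c = lc e (E i) f (E j)) ∨
    (∃ i : Fin 4, ∃ e ∈ sgn, c = lc e (E i) 0 (E i)) ∨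
    (∃ s0 ∈ sgn, ∃ s1 ∈ sgn, ∃ s2 ∈ sgn, ∃ s3 ∈ sgn, c = half s0 s1 s2 s3) := by
  decide +kernel

theorem toV_half {s0 s1 s2 s3 : ℤ} (h0 : s0 ∈ sgn) (h1 : s1 ∈ sgn) (h2 : s2 ∈ sgn)
    (h3 : s3 ∈ sgn) : toV (half s0 s1 s2 s3) = ![(s0 : ℝ)/2, s1/2, s2/2, s3/2] := by
  have p0 := (sgn_iff s0).1 h0
  have p1 := (sgn_iff s1).1 h1
  have p2 := (sgn_iff s2).1 h2
  have p3 := (sgn_iff s3).1 h3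
  have e1 : 2 * ((s1+s0)/2) = s1 + s0 := by omega
  have e2 : 2 * ((s2+s1+2*s0)/2) = s2+s1+2*s0 := by omega
  have e3 : 2 * ((s3+s2+s1+3*s0)/2) = s3+s2+s1+3*s0 := by omega
  set u := (s1+s0)/2
  set v := (s2+s1+2*s0)/2
  set w := (s3+s2+s1+3*s0)/2
  have e1' : 2 * (u : ℝ) = s1 + s0 := by exact_mod_cast e1
  have e2' : 2 * (v : ℝ) = s2+s1+2*s0 := by exact_mod_cast e2
  have e3' : 2 * (w : ℝ) = s3+s2+s1+3*s0 := by exact_mod_cast e3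
  have hh : half s0 s1 s2 s3 = (u, v, w, s0) := rfl
  rw [hh]
  funext t
  fin_cases t
  · simp [toV]
  · simp [toV]
    linarith
  · simp [toV]
    linarith
  · simp [toV]
    linarith

theorem roots_eq : roots = {α | ∃ c ∈ L48, α = toV c} := by
  ext α
  constructor
  · rintro (⟨i, j, hij, e, f, he, hf, rfl⟩ | ⟨i, e, he, rfl⟩ | ⟨s, hs, rfl⟩)
    · obtain ⟨e', he', rfl⟩ := sgn_real he
      obtain ⟨f', hf', rfl⟩ := sgn_real hf
      refine ⟨_, long_mem i j hij e' he' f' hf', ?_⟩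
      rw [toV_lc, toV_E, toV_E]
    · obtain ⟨e', he', rfl⟩ := sgn_real he
      refine ⟨_, short_mem i e' he', ?_⟩
      rw [toV_lc, toV_E]
      simp
    · obtain ⟨s0, h0, e0⟩ := sgn_real (hs 0)
      obtain ⟨s1, h1, e1⟩ := sgn_real (hs 1)
      obtain ⟨s2, h2, e2⟩ := sgn_real (hs 2)
      obtain ⟨s3, h3, e3⟩ := sgn_real (hs 3)
      refine ⟨_, half_mem s0 h0 s1 h1 s2 h2 s3 h3, ?_⟩
      rw [toV_half h0 h1 h2 h3]
      funext t
      fin_cases t <;> simp [e0, e1, e2, e3]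
  · rintro ⟨c, hc, rfl⟩
    rcases mem_cases c hc with ⟨i, j, hij, e, he, f, hf, rfl⟩ | ⟨i, e, he, rfl⟩ |
      ⟨s0, h0, s1, h1, s2, h2, s3, h3, rfl⟩
    · left
      refine ⟨i, j, hij, e, f, real_sgn he, real_sgn hf, ?_⟩
      rw [toV_lc, toV_E, toV_E]
    · right
      left
      refine ⟨i, e, real_sgn he, ?_⟩
      rw [toV_lc, toV_E]
      simp
    · right
      right
      refine ⟨![s0, s1, s2, s3], ?_, ?_⟩
      · intro t
        fin_cases t
        · exact real_sgn h0
        · exact real_sgn h1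
        · exact real_sgn h2
        · exact real_sgn h3
      · rw [toV_half h0 h1 h2 h3]
        funext t
        fin_cases t <;> simp

theorem isShort_toV (c : C) : isShort (toV c) ↔ isShortZ c = true := by
  have h : ∑ t, toV c t ^ 2 = ((Q c : ℤ) : ℝ) := by
    simp [Fin.sum_univ_four, toV, Q]
    ring
  rw [isShort, h, isShortZ, isZ_iff, sub_eq_zero]
  norm_cast

theorem par_toV (k1 k2 : ℝ) (c : C) :
    par k1 k2 (toV c) = ka (isShortZ c) 1 * k1 + kb (isShortZ c) 1 * k2 := by
  rw [par]
  cases h : isShortZ c with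
  | true =>
    rw [if_pos ((isShort_toV c).2 h)]
    simp [ka, kb]
  | false =>
    rw [if_neg (by rw [isShort_toV, h]; simp)]
    simp [ka, kb]

theorem L48_nodup : L48.Nodup := by decide +kernel

theorem ncard_roots (p : (Fin 4 → ℝ) → Prop) :
    {α ∈ roots | p α}.ncard = L48.countP fun c => decide (p (toV c)) := by
  have h : {α ∈ roots | p α} =
      toV '' ((L48.filter fun c => decide (p (toV c))).toFinset : Set C) := by
    ext α
    rw [roots_eq]
    simp only [Set.mem_ofPred_eq, Set.mem_image, Finset.mem_coe, List.mem_toFinset,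
      List.mem_filter, decide_eq_true_eq]
    constructor
    · rintro ⟨⟨c, hc, rfl⟩, hp⟩
      exact ⟨c, ⟨hc, hp⟩, rfl⟩
    · rintro ⟨c, ⟨hc, hp⟩, rfl⟩
      exact ⟨⟨c, hc, rfl⟩, hp⟩
  rw [h, Set.ncard_image_of_injective _ toV_inj, Set.ncard_coe_finset,
    List.toFinset_card_of_nodup (L48_nodup.filter _), List.countP_eq_length_filter]

theorem isResidual_iff (k1 k2 : ℝ) (x : Fin 4 → ℝ) : IsResidual k1 k2 x ↔
    (L48.countP fun c => decide (va c (sv x) = ka (isShortZ c) 1 * k1 + kb (isShortZ c) 1 * k2)) =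
    (L48.countP fun c => decide (va c (sv x) = 0)) + 4 := by
  rw [IsResidual, ncard_roots, ncard_roots]
  simp only [eval_toV, par_toV]

/-! ### reflections -/

/-- twice the bilinear form of `Q` -/
def BB (c d : C) : ℤ := Q (c.1 + d.1, c.2.1 + d.2.1, c.2.2.1 + d.2.2.1, c.2.2.2 + d.2.2.2) - Q c - Q d

theorem refl_mem : ∀ β ∈ L48, ∀ c ∈ L48, Q β ≠ 0 ∧ Q β * (BB β c / Q β) = BB β c ∧
    lc 1 c (-(BB β c / Q β)) β ∈ L48 := by
  decide +kernel

theorem eval_toV_toV (c d : C) : 2 * eval (toV c) (toV d) = BB c d := by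
  simp [eval, toV, Fin.sum_univ_four, BB, Q]
  ring

theorem refl_roots {β α : Fin 4 → ℝ} (hβ : β ∈ roots) (hα : α ∈ roots) :
    reflectBy β α ∈ roots := by
  rw [roots_eq] at *
  obtain ⟨b, hb, rfl⟩ := hβ
  obtain ⟨c, hc, rfl⟩ := hα
  obtain ⟨h0, h1, h2⟩ := refl_mem b hb c hc
  refine ⟨_, h2, ?_⟩
  have e : eval (toV b) (toV b) = Q b := by
    have := eval_toV_toV b b
    have h : BB b b = 2 * Q b := by
      simp [BB, Q]
      ring
    rw [h] at this
    push_cast at this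
    linarith
  have h0' : (Q b : ℝ) ≠ 0 := by exact_mod_cast h0
  have h1' : (Q b : ℝ) * ((BB b c / Q b : ℤ) : ℝ) = BB b c := by exact_mod_cast h1
  rw [toV_lc, reflectBy, eval_toV_toV, e, ← h1', mul_div_cancel_left₀ _ h0']
  push_cast
  module

theorem root_norm {β : Fin 4 → ℝ} (hβ : β ∈ roots) : eval β β ≠ 0 := by
  rw [roots_eq] at hβ
  obtain ⟨b, hb, rfl⟩ := hβ
  obtain ⟨h0, _, _⟩ := refl_mem b hb b hb
  have := eval_toV_toV b b
  have h : BB b b = 2 * Q b := by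
    simp [BB, Q]
    ring
  rw [h] at this
  push_cast at this
  have h0' : (Q b : ℝ) ≠ 0 := by exact_mod_cast h0
  intro h
  apply h0'
  linarith

theorem eval_add (α x y : Fin 4 → ℝ) : eval α (x + y) = eval α x + eval α y := by
  simp [eval, Fin.sum_univ_four]
  ring

theorem eval_sub (α x y : Fin 4 → ℝ) : eval α (x - y) = eval α x - eval α y := by
  simp [eval, Fin.sum_univ_four]
  ring

theorem eval_smul (r : ℝ) (α x : Fin 4 → ℝ) : eval α (r • x) = r * eval α x := by
  simp [eval, Fin.sum_univ_four]
  ring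

theorem eval_comm (α x : Fin 4 → ℝ) : eval α x = eval x α := by
  simp [eval, mul_comm]

theorem eval_refl (β α x : Fin 4 → ℝ) : eval α (reflectBy β x) = eval (reflectBy β α) x := by
  have h1 : eval α (reflectBy β x) = eval α x - 2 * eval β x / eval β β * eval α β := by
    rw [reflectBy, eval_sub, eval_smul]
  have h2 : eval (reflectBy β α) x = eval x α - 2 * eval β α / eval β β * eval x β := by
    rw [eval_comm, reflectBy, eval_sub, eval_smul]
  rw [h1, h2, eval_comm α x, eval_comm α β, eval_comm x β]
  ring

theorem refl_refl {β : Fin 4 → ℝ} (h : eval β β ≠ 0) (x : Fin 4 → ℝ) :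
    reflectBy β (reflectBy β x) = x := by
  have e : eval β (reflectBy β x) = - eval β x := by
    rw [reflectBy, eval_sub, eval_smul]
    field_simp
    ring
  have e2 : reflectBy β (reflectBy β x) =
    reflectBy β x - (2 * eval β (reflectBy β x) / eval β β) • β := rfl
  rw [e2, e, reflectBy]
  module

theorem short_refl {β : Fin 4 → ℝ} (h : eval β β ≠ 0) (α : Fin 4 → ℝ) :
    isShort (reflectBy β α) ↔ isShort α := by
  have key : ∀ y : Fin 4 → ℝ, isShort y ↔ eval y y = 1 := by
    intro y
    simp [isShort, eval, pow_two]
  rw [key, key, eval_refl, refl_refl h]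

theorem isResidual_refl {β : Fin 4 → ℝ} (hβ : β ∈ roots) (k1 k2 : ℝ) (x : Fin 4 → ℝ) :
    IsResidual k1 k2 (reflectBy β x) ↔ IsResidual k1 k2 x := by
  have hb := root_norm hβ
  have inj : Function.Injective (reflectBy β) := Function.LeftInverse.injective (g := reflectBy β) (refl_refl hb)
  have key : ∀ p q : (Fin 4 → ℝ) → Prop, (∀ α, p α ↔ q (reflectBy β α)) →
      {α ∈ roots | p α}.ncard = {α ∈ roots | q α}.ncard := by
    intro p q h
    rw [← Set.ncard_image_of_injective _ inj]
    congr 1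
    ext α
    simp only [Set.mem_image, Set.mem_ofPred_eq]
    constructor
    · rintro ⟨y, ⟨h1, h2⟩, rfl⟩
      exact ⟨refl_roots hβ h1, (h y).1 h2⟩
    · rintro ⟨h1, h2⟩
      refine ⟨reflectBy β α, ⟨refl_roots hβ h1, ?_⟩, refl_refl hb α⟩
      rw [h, refl_refl hb]
      exact h2
  rw [IsResidual, IsResidual, key (fun α => eval α (reflectBy β x) = par k1 k2 α)
    (fun α => eval α x = par k1 k2 α), key (fun α => eval α (reflectBy β x) = 0)
    (fun α => eval α x = 0)]
  · intro α
    rw [eval_refl]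
  · intro α
    rw [eval_refl]
    simp only [par, short_refl hb]

theorem inWeyl_id : InWeyl id := ⟨[], by simp, rfl⟩

theorem inWeyl_refl {β : Fin 4 → ℝ} (hβ : β ∈ roots) : InWeyl (reflectBy β) :=
  ⟨[β], by simpa using hβ, rfl⟩

theorem InWeyl.ind {p : ((Fin 4 → ℝ) → (Fin 4 → ℝ)) → Prop} (h0 : p id)
    (h1 : ∀ β ∈ roots, ∀ g, InWeyl g → p g → p (reflectBy β ∘ g)) :
    ∀ f, InWeyl f → p f := by
  rintro f ⟨L, hL, rfl⟩
  induction L with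
  | nil => exact h0
  | cons β L ih =>
    have hL' : ∀ α ∈ L, α ∈ roots := fun α hα => hL α (by simp [hα])
    exact h1 β (hL β (by simp)) _ ⟨L, hL', rfl⟩ (ih hL')

theorem InWeyl.refl_comp {β : Fin 4 → ℝ} (hβ : β ∈ roots) {g} (hg : InWeyl g) :
    InWeyl (reflectBy β ∘ g) := by
  obtain ⟨L, hL, rfl⟩ := hg
  refine ⟨β :: L, ?_, rfl⟩
  intro α hα
  rcases List.mem_cons.1 hα with rfl | h
  · exact hβ
  · exact hL α h

theorem InWeyl.comp {f g} (hf : InWeyl f) (hg : InWeyl g) : InWeyl (f ∘ g) := by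
  revert f
  apply InWeyl.ind (p := fun f => InWeyl (f ∘ g))
  · exact hg
  · intro β hβ h _ ih
    exact InWeyl.refl_comp hβ ih

theorem InWeyl.inv : ∀ f, InWeyl f → ∃ g, InWeyl g ∧ ∀ x, g (f x) = x := by
  apply InWeyl.ind
  · exact ⟨id, inWeyl_id, fun x => rfl⟩
  · rintro β hβ f _ ⟨g, hg, h⟩
    refine ⟨g ∘ reflectBy β, hg.comp (inWeyl_refl hβ), fun x => ?_⟩
    simp [refl_refl (root_norm hβ), h]

theorem InWeyl.residual (k1 k2 : ℝ) : ∀ f, InWeyl f → ∀ x,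
    (IsResidual k1 k2 (f x) ↔ IsResidual k1 k2 x) := by
  apply InWeyl.ind
  · intro x
    rfl
  · intro β hβ g _ ih x
    rw [Function.comp_apply, isResidual_refl hβ, ih]

theorem InWeyl.linear : ∀ f, InWeyl f → ∃ T : (Fin 4 → ℝ) →ₗ[ℝ] (Fin 4 → ℝ), ∀ x, T x = f x := by
  apply InWeyl.ind
  · exact ⟨LinearMap.id, fun x => rfl⟩
  · rintro β hβ g _ ⟨T, hT⟩
    let S : (Fin 4 → ℝ) →ₗ[ℝ] (Fin 4 → ℝ) :=
      { toFun := reflectBy β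
        map_add' := by
          intro x y
          simp only [reflectBy, eval_add]
          rw [mul_add, add_div]
          module
        map_smul' := by
          intro r x
          simp only [reflectBy, eval_smul, RingHom.id_apply]
          rw [show 2 * (r * eval β x) / eval β β = r * (2 * eval β x / eval β β) by ring]
          module }
    refine ⟨S.comp T, fun x => ?_⟩
    rw [LinearMap.comp_apply, hT]
    rfl

/-! ### dominance -/

def S : Fin 4 → C := ![(1,0,0,0), (0,1,0,0), (0,0,1,0), (0,0,0,1)]

theorem toV_S (j : Fin 4) : toV (S j) = simple j := by
  funext t
  fin_cases j <;> fin_cases t <;> simp [toV, S, simple] <;> norm_num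

theorem S_mem : ∀ j, S j ∈ L48 := by decide +kernel

theorem simple_mem (j : Fin 4) : simple j ∈ roots := by
  rw [roots_eq]
  exact ⟨S j, S_mem j, (toV_S j).symm⟩

def sim (j : Fin 4) (c : C) : C := lc 1 c (-(BB (S j) c / Q (S j))) (S j)

theorem sim_pos : ∀ j, ∀ c ∈ pos, c ≠ S j → sim j c ∈ pos ∧ sim j c ≠ S j ∧
    sim j (sim j c) = c := by
  decide +kernel

theorem toV_sim (j : Fin 4) {c : C} (hc : c ∈ L48) :
    reflectBy (simple j) (toV c) = toV (sim j c) := by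
  rw [← toV_S]
  obtain ⟨h0, h1, h2⟩ := refl_mem (S j) (S_mem j) c hc
  have e : eval (toV (S j)) (toV (S j)) = Q (S j) := by
    have := eval_toV_toV (S j) (S j)
    have h : BB (S j) (S j) = 2 * Q (S j) := by
      simp [BB, Q]
      ring
    rw [h] at this
    push_cast at this
    linarith
  have h0' : (Q (S j) : ℝ) ≠ 0 := by exact_mod_cast h0
  have h1' : (Q (S j) : ℝ) * ((BB (S j) c / Q (S j) : ℤ) : ℝ) = BB (S j) c := by exact_mod_cast h1
  rw [sim, toV_lc, reflectBy, eval_toV_toV, e, ← h1', mul_div_cancel_left₀ _ h0']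
  push_cast
  module

theorem pos_sub {c : C} (hc : c ∈ pos) : c ∈ L48 := by
  rw [L48]
  exact List.mem_append_left _ hc

def Ng (x : Fin 4 → ℝ) : Finset C := pos.toFinset.filter fun c => eval (toV c) x < 0

theorem S_pos : ∀ j, S j ∈ pos := by decide +kernel

theorem Ng_lt (x : Fin 4 → ℝ) (j : Fin 4) (h : eval (simple j) x < 0) :
    (Ng (reflectBy (simple j) x)).card < (Ng x).card := by
  have hmem : S j ∈ Ng x := by
    simp only [Ng, Finset.mem_filter, List.mem_toFinset, toV_S]
    exact ⟨S_pos j, h⟩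
  have key : ∀ c ∈ Ng (reflectBy (simple j) x), c ∈ pos ∧ c ≠ S j ∧ eval (toV (sim j c)) x < 0 := by
    intro c hc
    simp only [Ng, Finset.mem_filter, List.mem_toFinset] at hc
    refine ⟨hc.1, ?_, ?_⟩
    · rintro rfl
      have h2 := hc.2
      rw [toV_S] at h2
      have e : eval (simple j) (reflectBy (simple j) x) = - eval (simple j) x := by
        have := root_norm (simple_mem j)
        rw [reflectBy, eval_sub, eval_smul]
        field_simp
        ring
      rw [e] at h2
      linarith
    · rw [← toV_sim j (pos_sub hc.1), ← eval_refl]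
      exact hc.2
  rw [← Finset.card_erase_add_one hmem, Nat.lt_succ_iff]
  apply Finset.card_le_card_of_injOn (sim j)
  · intro c hc
    obtain ⟨h1, h2, h3⟩ := key c hc
    obtain ⟨h4, h5, _⟩ := sim_pos j c h1 h2
    simp only [Finset.coe_erase, Set.mem_sdiff, Set.mem_singleton_iff, Finset.mem_coe, Ng,
      Finset.mem_filter, List.mem_toFinset]
    exact ⟨⟨h4, h3⟩, h5⟩
  · intro c hc d hd hcd
    obtain ⟨h1, h2, _⟩ := key c hc
    obtain ⟨h3, h4, _⟩ := key d hd
    rw [← (sim_pos j c h1 h2).2.2, ← (sim_pos j d h3 h4).2.2, hcd]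

theorem dominant (n : ℕ) : ∀ x : Fin 4 → ℝ, (Ng x).card = n →
    ∃ f, InWeyl f ∧ ∀ j, 0 ≤ sv (f x) j := by
  induction n using Nat.strong_induction_on with
  | _ n ih =>
    intro x hx
    by_cases h : ∀ j, 0 ≤ sv x j
    · exact ⟨id, inWeyl_id, h⟩
    · push Not at h
      obtain ⟨j, hj⟩ := h
      have := Ng_lt x j hj
      rw [hx] at this
      obtain ⟨f, hf, h2⟩ := ih _ this _ rfl
      exact ⟨f ∘ reflectBy (simple j), hf.comp (inWeyl_refl (simple_mem j)), h2⟩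

/-! ### generic parameters -/

def ev2 (f k : ℝ × ℝ) : ℝ := f.1 * k.1 + f.2 * k.2

theorem dense_line (f : ℝ × ℝ) (hf : f ≠ 0) :
    IsOpen {k | ev2 f k ≠ 0} ∧ Dense {k | ev2 f k ≠ 0} := by
  constructor
  · apply isOpen_ne_fun
    · unfold ev2
      fun_prop
    · fun_prop
  · intro k
    rw [mem_closure_iff_seq_limit]
    by_cases hk : ev2 f k = 0
    · refine ⟨fun n : ℕ => k + (1 / ((n : ℝ) + 1)) • f, ?_, ?_⟩
      · intro n
        have e : ev2 f (k + (1 / ((n : ℝ) + 1)) • f) =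
            ev2 f k + 1 / ((n : ℝ) + 1) * (f.1 * f.1 + f.2 * f.2) := by
          simp [ev2]
          ring
        have h1 : 0 < f.1 * f.1 + f.2 * f.2 := by
          rcases f with ⟨p, q⟩
          by_contra h
          apply hf
          simp only [not_lt] at h
          have hp : p = 0 := by nlinarith [mul_self_nonneg p, mul_self_nonneg q]
          have hq : q = 0 := by nlinarith [mul_self_nonneg p, mul_self_nonneg q]
          rw [hp, hq]
          rfl
        show ev2 f (k + (1 / ((n : ℝ) + 1)) • f) ≠ 0
        rw [e, hk]
        positivity
      · have := (tendsto_one_div_add_atTop_nhds_zero_nat (𝕜 := ℝ)).smul_const f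
        simpa using this.const_add k
    · exact ⟨fun _ => k, fun _ => hk, tendsto_const_nhds⟩

theorem dense_lines (l : List (ℝ × ℝ)) :
    IsOpen {k | ∀ f ∈ l, f ≠ 0 → ev2 f k ≠ 0} ∧ Dense {k | ∀ f ∈ l, f ≠ 0 → ev2 f k ≠ 0} := by
  induction l with
  | nil => simp
  | cons f l ih =>
    by_cases hf : f = 0
    · simpa [hf] using ih
    · have e : {k | ∀ g ∈ f :: l, g ≠ 0 → ev2 g k ≠ 0} =
          {k | ev2 f k ≠ 0} ∩ {k | ∀ f ∈ l, f ≠ 0 → ev2 f k ≠ 0} := by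
        ext k
        simp [hf]
      obtain ⟨h1, h2⟩ := dense_line f hf
      rw [e]
      exact ⟨h1.inter ih.1, h2.inter_of_isOpen_left ih.2 h1⟩

theorem sv_add (x y : Fin 4 → ℝ) (r s : ℝ) (c : C) :
    va c (sv (r • x + s • y)) = va c (sv x) * r + va c (sv y) * s := by
  simp only [va, sv, eval_add, eval_smul]
  ring

theorem sv_inj {x y : Fin 4 → ℝ} (h : sv x = sv y) : x = y := by
  have h0 := congrFun h 0
  have h1 := congrFun h 1
  have h2 := congrFun h 2
  have h3 := congrFun h 3
  simp [sv, eval, simple, Fin.sum_univ_four] at h0 h1 h2 h3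
  funext t
  fin_cases t <;> simp <;> linarith

theorem map_pair (η : (ℝ × ℝ) →ₗ[ℝ] (Fin 4 → ℝ)) (k : ℝ × ℝ) :
    η k = k.1 • η (1, 0) + k.2 • η (0, 1) := by
  rw [← map_smul, ← map_smul, ← map_add]
  simp

theorem va_neg4 (c : C) (a : Fin 4 → ℝ) : va (neg4 c) a = - va c a := by
  simp [va, neg4]
  ring

theorem pos_nonneg : ∀ c ∈ pos, 0 ≤ c.1 ∧ 0 ≤ c.2.1 ∧ 0 ≤ c.2.2.1 ∧ 0 ≤ c.2.2.2 := by
  decide +kernel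

theorem classify (η : (ℝ × ℝ) →ₗ[ℝ] (Fin 4 → ℝ)) (hη : IsGenericResidual η)
    (hd : ∀ j, 0 ≤ sv (η (1, 10)) j) : ∃ t ∈ sol, Match (sv (η (1, 0))) (sv (η (0, 1))) t := by
  obtain ⟨U, hU1, hU2, hU⟩ := hη
  set a := sv (η (1, 0)) with ha
  set b := sv (η (0, 1)) with hb
  have hv : ∀ c k, va c (sv (η k)) = va c a * k.1 + va c b * k.2 := by
    intro c k
    rw [map_pair η k, sv_add]
  let F : List (ℝ × ℝ) := L48.map (fun c => (va c a, va c b)) ++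
    L48.map (fun c => (va c a - ka (isShortZ c) 1, va c b - kb (isShortZ c) 1))
  obtain ⟨k, hk1, hk2⟩ := ((dense_lines F).2.inter_of_isOpen_right hU2 hU1).nonempty
  have hZ : ∀ c ∈ L48, (va c (sv (η k)) = 0 ↔ ZZ a b c) := by
    intro c hc
    rw [hv]
    constructor
    · intro h
      by_contra hn
      refine hk1 (va c a, va c b) ?_ ?_ h
      · exact List.mem_append_left _ (List.mem_map.2 ⟨c, hc, rfl⟩)
      · intro h0
        exact hn ⟨congrArg Prod.fst h0, congrArg Prod.snd h0⟩
    · rintro ⟨h1, h2⟩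
      rw [h1, h2]
      ring
  have hP : ∀ c ∈ L48, (va c (sv (η k)) = ka (isShortZ c) 1 * k.1 + kb (isShortZ c) 1 * k.2 ↔
      PP a b c (isShortZ c)) := by
    intro c hc
    rw [hv]
    constructor
    · intro h
      by_contra hn
      refine hk1 (va c a - ka (isShortZ c) 1, va c b - kb (isShortZ c) 1) ?_ ?_ ?_
      · exact List.mem_append_right _ (List.mem_map.2 ⟨c, hc, rfl⟩)
      · intro h0
        exact hn ⟨sub_eq_zero.1 (congrArg Prod.fst h0), sub_eq_zero.1 (congrArg Prod.snd h0)⟩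
      · simp only [ev2]
        linarith
    · rintro ⟨h1, h2⟩
      rw [h1, h2]
  have hres := (isResidual_iff _ _ _).1 (hU k hk2)
  have e1 : (L48.countP fun c => decide (va c (sv (η k)) =
      ka (isShortZ c) 1 * k.1 + kb (isShortZ c) 1 * k.2)) =
      L48.countP fun c => decide (PP a b c (isShortZ c)) :=
    List.countP_congr (fun c hc => by simpa using hP c hc)
  have e2 : (L48.countP fun c => decide (va c (sv (η k)) = 0)) =
      L48.countP fun c => decide (ZZ a b c) :=
    List.countP_congr (fun c hc => by simpa using hZ c hc)
  rw [e1, e2] at hres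
  have hnn : ∀ c ∈ pos, 0 ≤ va c a + 10 * va c b := by
    intro c hc
    have h := hv c (1, 10)
    obtain ⟨h1, h2, h3, h4⟩ := pos_nonneg c hc
    have h1' : (0 : ℝ) ≤ c.1 := by exact_mod_cast h1
    have h2' : (0 : ℝ) ≤ c.2.1 := by exact_mod_cast h2
    have h3' : (0 : ℝ) ≤ c.2.2.1 := by exact_mod_cast h3
    have h4' : (0 : ℝ) ≤ c.2.2.2 := by exact_mod_cast h4
    have h5 : 0 ≤ va c (sv (η (1, 10))) := by
      have := hd 0
      have := hd 1
      have := hd 2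
      have := hd 3
      unfold va
      positivity
    rw [h] at h5
    simp only at h5
    linarith
  have n1 : (L48.countP fun c => decide (PP a b c (isShortZ c))) =
      cP a b rows0 := by
    rw [rows0_eq, cP, List.countP_map, L48, List.countP_append]
    have : (pos.map neg4).countP (fun c => decide (PP a b c (isShortZ c))) = 0 := by
      rw [List.countP_eq_zero]
      intro d hd' hp
      obtain ⟨c, hc, rfl⟩ := List.mem_map.1 hd'
      have h := hnn c hc
      obtain ⟨h1, h2⟩ := of_decide_eq_true hp
      rw [va_neg4] at h1 h2
      cases hs : isShortZ (neg4 c) <;> simp [hs, ka, kb] at h1 h2 <;> linarith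
    rw [this, add_zero]
    rfl
  have n2 : (L48.countP fun c => decide (ZZ a b c)) = 2 * cZ a b rows0 := by
    rw [rows0_eq, cZ, List.countP_map, L48, List.countP_append, List.countP_map, two_mul]
    congr 1
    apply List.countP_congr
    intro c _
    show decide (ZZ a b (neg4 c)) = true ↔ decide (ZZ a b c) = true
    rw [decide_eq_true_iff, decide_eq_true_iff, ZZ, ZZ, va_neg4, va_neg4, neg_eq_zero, neg_eq_zero]
  rw [n1, n2] at hres
  refine go_sound a b 30 1 sr0 rows0 [] 0 0 one_ne_zero ?_ ?_ (by simp) (by simp) ?_ go_true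
  · simp [SR, sr0, Good, row0, va, Row.ev]
  · intro r hr
    rw [rows0_eq] at hr
    obtain ⟨c, hc, rfl⟩ := List.mem_map.1 hr
    refine ⟨?_, hnn c hc⟩
    simp [Good, row0, va, Row.ev]
  · simp [cZ] at hres ⊢
    omega

/-! ### regular parameters -/

/-- integer coefficients of `vals` -/
def vz : Fin 8 → Fin 4 → ℤ × ℤ :=
  ![![(1,0), (1,0), (0,1), (0,1)],
    ![(1,0), (1,0), (-1,1), (0,1)],
    ![(1,0), (1,0), (-1,1), (1,0)],
    ![(1,0), (1,0), (-2,1), (0,1)],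
    ![(1,0), (1,0), (-2,1), (2,0)],
    ![(1,0), (1,0), (-2,1), (1,0)],
    ![(1,0), (1,0), (-2,1), (0,-2)],
    ![(0,0), (1,0), (0,0), (-1,1)]]

/-- the linear factors of the regularity conditions -/
def facs : Fin 8 → List (ℤ × ℤ) :=
  ![[(2,3), (3,4), (3,5), (5,6)],
    [(1,6), (1,-6), (0,1)],
    [(3,2), (1,3), (2,3), (3,4)],
    [(2,-3), (3,-4), (3,-5), (5,-6)],
    [(3,2), (3,-2), (1,3), (1,-3)],
    [(3,-2), (1,-3), (2,-3), (3,-4)],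
    [(3,1), (3,-1), (1,0)],
    [(1,0), (0,1)]]

def evz (f : ℤ × ℤ) (k : ℝ × ℝ) : ℝ := f.1 * k.1 + f.2 * k.2

def fz (i : Fin 8) (c : C) : ℤ × ℤ :=
  (c.1 * (vz i 0).1 + c.2.1 * (vz i 1).1 + c.2.2.1 * (vz i 2).1 + c.2.2.2 * (vz i 3).1,
   c.1 * (vz i 0).2 + c.2.1 * (vz i 1).2 + c.2.2.1 * (vz i 2).2 + c.2.2.2 * (vz i 3).2)

def gz (i : Fin 8) (c : C) : ℤ × ℤ :=
  ((fz i c).1 - ka (isShortZ c) 1, (fz i c).2 - kb (isShortZ c) 1)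

theorem vals_eq (i : Fin 8) (k : ℝ × ℝ) (j : Fin 4) : vals i k j = evz (vz i j) k := by
  fin_cases i <;> fin_cases j <;> simp [vals, vz, evz] <;> ring

theorem va_fz (i : Fin 8) (k : ℝ × ℝ) (c : C) : va c (vals i k) = evz (fz i c) k := by
  simp only [va, vals_eq, evz, fz]
  push_cast
  ring

theorem va_gz (i : Fin 8) (k : ℝ × ℝ) (c : C) :
    va c (vals i k) = ka (isShortZ c) 1 * k.1 + kb (isShortZ c) 1 * k.2 ↔ evz (gz i c) k = 0 := by
  rw [va_fz, ← sub_eq_zero]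
  have : evz (gz i c) k = evz (fz i c) k -
      (ka (isShortZ c) 1 * k.1 + kb (isShortZ c) 1 * k.2) := by
    simp only [evz, gz]
    push_cast
    ring
  rw [this]

theorem regCond_iff (i : Fin 8) (k1 k2 : ℝ) :
    regCond i k1 k2 ↔ ∀ f ∈ facs i, evz f (k1, k2) ≠ 0 := by
  have e1 : (k1 ^ 2 - 36 * k2 ^ 2) = (k1 + 6 * k2) * (k1 - 6 * k2) := by ring
  have e2 : (9 * k1 ^ 2 - 4 * k2 ^ 2) = (3 * k1 + 2 * k2) * (3 * k1 - 2 * k2) := by ring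
  have e3 : (k1 ^ 2 - 9 * k2 ^ 2) = (k1 + 3 * k2) * (k1 - 3 * k2) := by ring
  have e4 : (9 * k1 ^ 2 - k2 ^ 2) = (3 * k1 + k2) * (3 * k1 - k2) := by ring
  fin_cases i <;>
    simp [regCond, facs, evz, e1, e2, e3, e4, ← sub_eq_add_neg, and_assoc]

/-- the test for a vanishing pattern `z` of the relevant linear forms -/
def resB (i : Fin 8) (z : ℤ × ℤ → Bool) : Bool :=
  ((L48.countP fun c => z (gz i c)) == (L48.countP fun c => z (fz i c)) + 4) ==
    (facs i).all fun f => !(z f)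

def forms (i : Fin 8) : List (ℤ × ℤ) :=
  (L48.map (fz i) ++ L48.map (gz i) ++ facs i).dedup

def zl (l m : ℤ × ℤ) : Bool := isZ (m.1 * l.2 - m.2 * l.1)

def z0 (m : ℤ × ℤ) : Bool := isZ m.1 && isZ m.2

set_option maxRecDepth 100000 in
theorem res_check : ∀ i : Fin 8, resB i (fun _ => true) = true ∧ resB i z0 = true ∧
    ∀ l ∈ forms i, (z0 l || resB i (zl l)) = true := by
  decide +kernel

theorem res_of (i : Fin 8) (k : ℝ × ℝ) (x : Fin 4 → ℝ) (hx : sv x = vals i k) (z : ℤ × ℤ → Bool)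
    (hz : ∀ m ∈ forms i, (z m = true ↔ evz m k = 0)) (h : resB i z = true) :
    IsResidual k.1 k.2 x ↔ regCond i k.1 k.2 := by
  have hf : ∀ c ∈ L48, fz i c ∈ forms i := by
    intro c hc
    rw [forms, List.mem_dedup]
    exact List.mem_append_left _ (List.mem_append_left _ (List.mem_map.2 ⟨c, hc, rfl⟩))
  have hg : ∀ c ∈ L48, gz i c ∈ forms i := by
    intro c hc
    rw [forms, List.mem_dedup]
    exact List.mem_append_left _ (List.mem_append_right _ (List.mem_map.2 ⟨c, hc, rfl⟩))
  have hh : ∀ f ∈ facs i, f ∈ forms i := by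
    intro c hc
    rw [forms, List.mem_dedup]
    exact List.mem_append_right _ hc
  rw [isResidual_iff, regCond_iff, hx]
  have e1 : (L48.countP fun c => decide (va c (vals i k) =
      ka (isShortZ c) 1 * k.1 + kb (isShortZ c) 1 * k.2)) = L48.countP fun c => z (gz i c) :=
    List.countP_congr (fun c hc => by rw [decide_eq_true_iff, va_gz, hz _ (hg c hc)])
  have e2 : (L48.countP fun c => decide (va c (vals i k) = 0)) = L48.countP fun c => z (fz i c) :=
    List.countP_congr (fun c hc => by rw [decide_eq_true_iff, va_fz, hz _ (hf c hc)])
  have e3 : (∀ f ∈ facs i, evz f k ≠ 0) ↔ ((facs i).all fun f => !(z f)) = true := by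
    rw [List.all_eq_true]
    refine forall₂_congr fun f hf' => ?_
    rw [Ne, ← hz f (hh f hf')]
    simp
  rw [e1, e2]
  show _ ↔ ∀ f ∈ facs i, evz f k ≠ 0
  rw [e3]
  rw [resB, beq_iff_eq] at h
  rw [← h, beq_iff_eq]

theorem reg_main (i : Fin 8) (k : ℝ × ℝ) (x : Fin 4 → ℝ) (hx : sv x = vals i k) :
    IsResidual k.1 k.2 x ↔ regCond i k.1 k.2 := by
  obtain ⟨c1, c2, c3⟩ := res_check i
  by_cases hk : k = 0
  · refine res_of i k x hx _ ?_ c1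
    intro m _
    simp [hk, evz]
  by_cases hl : ∃ l ∈ forms i, z0 l = false ∧ evz l k = 0
  · obtain ⟨l, hl1, hl2, hl3⟩ := hl
    have h := c3 l hl1
    rw [hl2, Bool.false_or] at h
    refine res_of i k x hx _ ?_ h
    intro m _
    rw [zl, isZ_iff]
    have hcast : m.1 * l.2 - m.2 * l.1 = 0 ↔ (m.1 : ℝ) * l.2 - m.2 * l.1 = 0 := by
      exact_mod_cast Iff.rfl
    rw [hcast]
    simp only [evz] at hl3 ⊢
    have hl2' : (l.1 : ℝ) ≠ 0 ∨ (l.2 : ℝ) ≠ 0 := by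
      by_contra hc
      push Not at hc
      obtain ⟨h1, h2⟩ := hc
      have h1' : l.1 = 0 := Int.cast_eq_zero.1 h1
      have h2' : l.2 = 0 := Int.cast_eq_zero.1 h2
      simp [z0, h1', h2', isZ] at hl2
    have hk' : k.1 ≠ 0 ∨ k.2 ≠ 0 := by
      by_contra hc
      push Not at hc
      exact hk (Prod.ext hc.1 hc.2)
    constructor
    · intro h
      rcases hl2' with h1 | h1
      · apply (mul_eq_zero.1 _).resolve_left h1
        linear_combination (m.1 : ℝ) * hl3 - k.2 * h
      · apply (mul_eq_zero.1 _).resolve_left h1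
        linear_combination (m.2 : ℝ) * hl3 + k.1 * h
    · intro h
      rcases hk' with h1 | h1
      · apply (mul_eq_zero.1 _).resolve_left h1
        linear_combination (l.2 : ℝ) * h - m.2 * hl3
      · apply (mul_eq_zero.1 _).resolve_left h1
        linear_combination (m.1 : ℝ) * hl3 - l.1 * h
  · refine res_of i k x hx _ ?_ c2
    intro m hm
    constructor
    · intro h
      simp only [z0, Bool.and_eq_true, isZ_iff] at h
      simp [evz, h.1, h.2]
    · intro h
      by_contra hc
      exact hl ⟨m, hm, by simpa using hc, h⟩

/-! ### distinctness -/

def pts : List (ℤ × ℤ) :=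
  [(3,-2), (4,-3), (5,-3), (6,-5), (6,-1), (6,1), (1,0), (2,-3), (3,-1), (3,2), (4,3), (5,3),
   (6,5), (2,3), (3,1), (1,3), (1,-3), (0,1)]

def regZ (i : Fin 8) (p : ℤ × ℤ) : Bool := (facs i).all fun f => !(isZ (f.1 * p.1 + f.2 * p.2))

theorem regZ_ne : ∀ i j : Fin 8, i ≠ j → ∃ p ∈ pts, regZ i p ≠ regZ j p := by decide +kernel

theorem regZ_iff (i : Fin 8) (p : ℤ × ℤ) : regZ i p = true ↔ regCond i p.1 p.2 := by
  rw [regCond_iff, regZ, List.all_eq_true]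
  refine forall₂_congr fun f _ => ?_
  have : isZ (f.1 * p.1 + f.2 * p.2) = true ↔ evz f (p.1, p.2) = 0 := by
    rw [isZ_iff]
    show _ ↔ (f.1 : ℝ) * (p.1 : ℝ) + (f.2 : ℝ) * (p.2 : ℝ) = 0
    exact_mod_cast Iff.rfl
  rw [Ne, ← this]
  simp

theorem facs_ne : ∀ i, ∀ f ∈ facs i, f ≠ 0 := by decide +kernel

theorem reg_dense (i : Fin 8) : IsOpen {k : ℝ × ℝ | regCond i k.1 k.2} ∧
    Dense {k : ℝ × ℝ | regCond i k.1 k.2} := by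
  have h := dense_lines ((facs i).map fun f => ((f.1 : ℝ), (f.2 : ℝ)))
  have e : {k : ℝ × ℝ | regCond i k.1 k.2} =
      {k | ∀ f ∈ ((facs i).map fun f => ((f.1 : ℝ), (f.2 : ℝ))), f ≠ 0 → ev2 f k ≠ 0} := by
    ext k
    simp only [Set.mem_ofPred_eq]
    rw [regCond_iff]
    constructor
    · intro h f hf _
      obtain ⟨g, hg, rfl⟩ := List.mem_map.1 hf
      exact h g hg
    · intro h f hf
      refine h _ (List.mem_map.2 ⟨f, hf, rfl⟩) ?_
      intro h0
      apply facs_ne i f hf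
      have h1 := congrArg Prod.fst h0
      have h2 := congrArg Prod.snd h0
      simp at h1 h2
      exact Prod.ext h1 h2
  rw [e]
  exact h

/-! ### the conjugation of the seventh point to its dominant representative -/

theorem sv_refl0 {x : Fin 4 → ℝ} {a b c d : ℝ} (h : sv x = ![a, b, c, d]) :
    sv (reflectBy (simple 0) x) = ![-a, b + a, c, d] := by
  have h0 := congrFun h 0
  have h1 := congrFun h 1
  have h2 := congrFun h 2
  have h3 := congrFun h 3
  simp [sv, eval, simple, Fin.sum_univ_four] at h0 h1 h2 h3
  funext t
  fin_cases t <;> simp [sv, eval, simple, Fin.sum_univ_four, reflectBy] <;> linarith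

theorem sv_refl1 {x : Fin 4 → ℝ} {a b c d : ℝ} (h : sv x = ![a, b, c, d]) :
    sv (reflectBy (simple 1) x) = ![a + b, -b, c + b, d] := by
  have h0 := congrFun h 0
  have h1 := congrFun h 1
  have h2 := congrFun h 2
  have h3 := congrFun h 3
  simp [sv, eval, simple, Fin.sum_univ_four] at h0 h1 h2 h3
  funext t
  fin_cases t <;> simp [sv, eval, simple, Fin.sum_univ_four, reflectBy] <;> linarith

theorem sv_refl2 {x : Fin 4 → ℝ} {a b c d : ℝ} (h : sv x = ![a, b, c, d]) :
    sv (reflectBy (simple 2) x) = ![a, b + 2 * c, -c, d + c] := by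
  have h0 := congrFun h 0
  have h1 := congrFun h 1
  have h2 := congrFun h 2
  have h3 := congrFun h 3
  simp [sv, eval, simple, Fin.sum_univ_four] at h0 h1 h2 h3
  funext t
  fin_cases t <;> simp [sv, eval, simple, Fin.sum_univ_four, reflectBy] <;> linarith

theorem sv_refl3 {x : Fin 4 → ℝ} {a b c d : ℝ} (h : sv x = ![a, b, c, d]) :
    sv (reflectBy (simple 3) x) = ![a, b, c + d, -d] := by
  have h0 := congrFun h 0
  have h1 := congrFun h 1
  have h2 := congrFun h 2
  have h3 := congrFun h 3
  simp [sv, eval, simple, Fin.sum_univ_four] at h0 h1 h2 h3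
  funext t
  fin_cases t <;> simp [sv, eval, simple, Fin.sum_univ_four, reflectBy] <;> linarith

theorem word6 : ∃ f, InWeyl f ∧ ∀ (k : ℝ × ℝ) (x : Fin 4 → ℝ), sv x = vals 6 k →
    sv (f x) = ![k.1, k.1, k.1, k.2 - 3 * k.1] := by
  have r := fun j => inWeyl_refl (simple_mem j)
  refine ⟨reflectBy (simple 2) ∘ reflectBy (simple 1) ∘ reflectBy (simple 2) ∘
    reflectBy (simple 0) ∘ reflectBy (simple 1) ∘ reflectBy (simple 2) ∘ reflectBy (simple 3) ∘
    reflectBy (simple 2) ∘ reflectBy (simple 1) ∘ reflectBy (simple 2) ∘ reflectBy (simple 0) ∘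
    reflectBy (simple 1) ∘ reflectBy (simple 2) ∘ reflectBy (simple 3), ?_, ?_⟩
  · exact (r 2).comp ((r 1).comp ((r 2).comp ((r 0).comp ((r 1).comp ((r 2).comp ((r 3).comp
      ((r 2).comp ((r 1).comp ((r 2).comp ((r 0).comp ((r 1).comp ((r 2).comp (r 3)))))))))))))
  · intro k x h
    have h' : sv x = ![k.1, k.1, k.2 - 2 * k.1, -2 * k.2] := h
    have e := sv_refl2 (sv_refl1 (sv_refl2 (sv_refl0 (sv_refl1 (sv_refl2 (sv_refl3 (sv_refl2
      (sv_refl1 (sv_refl2 (sv_refl0 (sv_refl1 (sv_refl2 (sv_refl3 h')))))))))))))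
    simp only [Function.comp_apply]
    rw [e]
    funext t
    fin_cases t <;> simp <;> ring

def z6 : Fin 8 → (ℝ × ℝ) → (Fin 4 → ℝ) := fun i k =>
  if i = 6 then ![k.1, k.1, k.1, k.2 - 3 * k.1] else vals i k

theorem sol_match {t : ℤ × ℤ × ℤ × ℤ × ℤ × ℤ × ℤ × ℤ} (ht : t ∈ sol) :
    ∃ i : Fin 8, ∀ a b : Fin 4 → ℝ, Match a b t → ∀ k : ℝ × ℝ,
      (fun j => a j * k.1 + b j * k.2) = z6 i k := by
  simp only [sol, List.mem_cons, List.not_mem_nil, or_false] at ht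
  rcases ht with rfl | rfl | rfl | rfl | rfl | rfl | rfl | rfl
  · refine ⟨0, ?_⟩
    rintro a b ⟨⟨h0, g0⟩, ⟨h1, g1⟩, ⟨h2, g2⟩, ⟨h3, g3⟩⟩ k
    funext j
    fin_cases j <;> simp [z6, vals, h0, h1, h2, h3, g0, g1, g2, g3]
  · refine ⟨1, ?_⟩
    rintro a b ⟨⟨h0, g0⟩, ⟨h1, g1⟩, ⟨h2, g2⟩, ⟨h3, g3⟩⟩ k
    funext j
    fin_cases j <;> simp [z6, vals, h0, h1, h2, h3, g0, g1, g2, g3]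
    ring
  · refine ⟨2, ?_⟩
    rintro a b ⟨⟨h0, g0⟩, ⟨h1, g1⟩, ⟨h2, g2⟩, ⟨h3, g3⟩⟩ k
    funext j
    fin_cases j <;> simp [z6, vals, h0, h1, h2, h3, g0, g1, g2, g3]
    ring
  · refine ⟨3, ?_⟩
    rintro a b ⟨⟨h0, g0⟩, ⟨h1, g1⟩, ⟨h2, g2⟩, ⟨h3, g3⟩⟩ k
    funext j
    fin_cases j <;> simp [z6, vals, h0, h1, h2, h3, g0, g1, g2, g3]
    ring
  · refine ⟨4, ?_⟩
    rintro a b ⟨⟨h0, g0⟩, ⟨h1, g1⟩, ⟨h2, g2⟩, ⟨h3, g3⟩⟩ k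
    funext j
    fin_cases j <;> simp [z6, vals, h0, h1, h2, h3, g0, g1, g2, g3]
    ring
  · refine ⟨5, ?_⟩
    rintro a b ⟨⟨h0, g0⟩, ⟨h1, g1⟩, ⟨h2, g2⟩, ⟨h3, g3⟩⟩ k
    funext j
    fin_cases j <;> simp [z6, vals, h0, h1, h2, h3, g0, g1, g2, g3]
    ring
  · refine ⟨6, ?_⟩
    rintro a b ⟨⟨h0, g0⟩, ⟨h1, g1⟩, ⟨h2, g2⟩, ⟨h3, g3⟩⟩ k
    funext j
    fin_cases j <;> simp [z6, vals, h0, h1, h2, h3, g0, g1, g2, g3]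
    ring
  · refine ⟨7, ?_⟩
    rintro a b ⟨⟨h0, g0⟩, ⟨h1, g1⟩, ⟨h2, g2⟩, ⟨h3, g3⟩⟩ k
    funext j
    fin_cases j <;> simp [z6, vals, h0, h1, h2, h3, g0, g1, g2, g3]
    ring

theorem word_z6 (i : Fin 8) : ∃ f, InWeyl f ∧ ∀ (k : ℝ × ℝ) (x : Fin 4 → ℝ), sv x = vals i k →
    sv (f x) = z6 i k := by
  by_cases hi : i = 6
  · subst hi
    obtain ⟨f, hf, h⟩ := word6
    refine ⟨f, hf, fun k x hx => ?_⟩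
    rw [h k x hx]
    simp [z6]
  · refine ⟨id, inWeyl_id, fun k x hx => ?_⟩
    simpa [z6, hi] using hx

/-- The eight linear maps `ξ_1,...,ξ_8` (determined by their values on the simple
roots) are generic linear residual points of `F4`, lie in pairwise distinct
`W0`-orbits, every generic linear residual point of `F4` is `W0`-conjugate to exactly
one of them, and their regular parameter sets `K^reg_{ξ_i}` are as listed. -/
theorem f4_generic_residual_classification
    (ξ : Fin 8 → ((ℝ × ℝ) →ₗ[ℝ] (Fin 4 → ℝ)))
    (hval : ∀ (i : Fin 8) (k : ℝ × ℝ) (j : Fin 4), eval (simple j) (ξ i k) = vals i k j) :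
    (∀ i, IsGenericResidual (ξ i)) ∧
    (∀ i j, i ≠ j → ¬ GenSameOrbit (ξ i) (ξ j)) ∧
    (∀ η : (ℝ × ℝ) →ₗ[ℝ] (Fin 4 → ℝ), IsGenericResidual η →
      ∃! i : Fin 8, GenSameOrbit (ξ i) η) ∧
    (∀ (i : Fin 8) (k1 k2 : ℝ), IsResidual k1 k2 (ξ i (k1, k2)) ↔ regCond i k1 k2) := by
  have hsv : ∀ i k, sv (ξ i k) = vals i k := fun i k => funext fun j => hval i k j
  have hreg : ∀ (i : Fin 8) (k : ℝ × ℝ), IsResidual k.1 k.2 (ξ i k) ↔ regCond i k.1 k.2 :=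
    fun i k => reg_main i k _ (hsv i k)
  have horb : ∀ (i : Fin 8) (η : (ℝ × ℝ) →ₗ[ℝ] (Fin 4 → ℝ)), GenSameOrbit (ξ i) η →
      ∀ k : ℝ × ℝ, (IsResidual k.1 k.2 (η k) ↔ regCond i k.1 k.2) := by
    rintro i η ⟨f, hf, h⟩ k
    rw [h, InWeyl.residual _ _ f hf, hreg]
  have hne : ∀ i j, (∀ k : ℝ × ℝ, regCond i k.1 k.2 ↔ regCond j k.1 k.2) → i = j := by
    intro i j h
    by_contra hij
    obtain ⟨p, _, hp⟩ := regZ_ne i j hij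
    apply hp
    rw [Bool.eq_iff_iff, regZ_iff, regZ_iff]
    exact h (p.1, p.2)
  refine ⟨?_, ?_, ?_, ?_⟩
  · intro i
    exact ⟨_, (reg_dense i).1, (reg_dense i).2, fun k hk => (hreg i k).2 hk⟩
  · intro i j hij h
    apply hij
    apply hne
    intro k
    rw [← horb i _ h k, hreg]
  · intro η hη
    obtain ⟨f, hf, hdom⟩ := dominant _ (η (1, 10)) rfl
    obtain ⟨T, hT⟩ := InWeyl.linear f hf
    have hgen : IsGenericResidual (T.comp η) := by
      obtain ⟨U, h1, h2, h3⟩ := hη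
      refine ⟨U, h1, h2, fun k hk => ?_⟩
      rw [LinearMap.comp_apply, hT, InWeyl.residual _ _ f hf]
      exact h3 k hk
    obtain ⟨t, ht, hm⟩ := classify (T.comp η) hgen (by
      intro j
      rw [LinearMap.comp_apply, hT]
      exact hdom j)
    obtain ⟨i, hi⟩ := sol_match ht
    obtain ⟨g, hg, hgz⟩ := word_z6 i
    obtain ⟨f', hf', hinv⟩ := InWeyl.inv f hf
    have hex : GenSameOrbit (ξ i) η := by
      refine ⟨f' ∘ g, hf'.comp hg, fun k => ?_⟩
      have e : g (ξ i k) = f (η k) := by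
        apply sv_inj
        rw [hgz k _ (hsv i k), ← hi _ _ hm k, ← hT, ← LinearMap.comp_apply,
          map_pair (T.comp η) k]
        funext j
        simp only [sv, eval_add, eval_smul]
        ring
      rw [Function.comp_apply, e, hinv]
    refine ⟨i, hex, fun j hj => ?_⟩
    apply hne
    intro k
    rw [← horb i _ hex k, ← horb j _ hj k]
  · intro i k1 k2
    exact hreg i (k1, k2)

end F4Res

end
end

section
/- Each of the three linear maps ξ_1, ξ_2, ξ_3 : ℝ² → V is a generic linear residual point of the root system of type G2; they lie in pairwise distinct W0-orbits (as generic linear residual points), and every generic linear residual point of G2 is W0-conjugate to exactly one of them. Moreover K^reg_{ξ1} = {(k1,k2) : (k1+2k2)(2k1+3k2) ≠ 0}, K^reg_{ξ2} = {(k1,k2) : (k1−2k2)(2k1−3k2) ≠ 0}, and K^reg_{ξ3} = {(k1,k2) : k1·k2 ≠ 0}. -/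
open Classical

noncomputable section

namespace G2Res

/-- shorthand for `√3` -/
def s3 : ℝ := Real.sqrt 3

/-- evaluation of a linear functional (given by its coefficient vector) at a point -/
def eval (α ξ : Fin 2 → ℝ) : ℝ := ∑ t, α t * ξ t

/-- the root system of type `G2` in `ℝ²` (six short roots of squared length `1`, six
long roots of squared length `3`), realized so that `α1 = (−3/2, √3/2)` (long) and
`α2 = (1,0)` (short) are simple roots with `α1(α2∨) = −3` and `α2(α1∨) = −1` -/
def roots : Set (Fin 2 → ℝ) :=
  {![1, 0], ![-1, 0], ![1/2, s3/2], ![-(1/2), -(s3/2)], ![-(1/2), s3/2], ![1/2, -(s3/2)],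
   ![-(3/2), s3/2], ![3/2, -(s3/2)], ![3/2, s3/2], ![-(3/2), -(s3/2)], ![0, s3], ![0, -s3]}

/-- the short roots are the roots of squared length `1` -/
def isShort (α : Fin 2 → ℝ) : Prop := ∑ t, α t ^ 2 = 1

/-- the parameter function with value `k1` on the long roots and `k2` on the short
roots -/
def par (k1 k2 : ℝ) (α : Fin 2 → ℝ) : ℝ := if isShort α then k2 else k1

/-- `ξ` is a linear `(G2,(k1,k2))`-residual point -/
def IsResidual (k1 k2 : ℝ) (ξ : Fin 2 → ℝ) : Prop :=
  {α ∈ roots | eval α ξ = par k1 k2 α}.ncard = {α ∈ roots | eval α ξ = 0}.ncard + 2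

/-- a linear map `ξ : ℝ² → ℝ²` is a generic linear residual point of type `G2` -/
def IsGenericResidual (ξ : (ℝ × ℝ) →ₗ[ℝ] (Fin 2 → ℝ)) : Prop :=
  ∃ U : Set (ℝ × ℝ), IsOpen U ∧ Dense U ∧ ∀ k ∈ U, IsResidual k.1 k.2 (ξ k)

/-- the orthogonal reflection of `ℝ²` in the line perpendicular to `α` -/
def reflectBy (α : Fin 2 → ℝ) : (Fin 2 → ℝ) → (Fin 2 → ℝ) :=
  fun v => v - (2 * eval α v / eval α α) • α

/-- `f` belongs to the Weyl group `W0` of `G2`, i.e. `f` is a composition of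
reflections in the roots -/
def InWeyl (f : (Fin 2 → ℝ) → (Fin 2 → ℝ)) : Prop :=
  ∃ L : List (Fin 2 → ℝ), (∀ α ∈ L, α ∈ roots) ∧
    f = L.foldr (fun α g => reflectBy α ∘ g) id

/-- two generic linear residual points lie in the same `W0`-orbit (for the action of
`W0` by postcomposition) -/
def GenSameOrbit (ξ η : (ℝ × ℝ) →ₗ[ℝ] (Fin 2 → ℝ)) : Prop :=
  ∃ f, InWeyl f ∧ ∀ k, η k = f (ξ k)

/-- the simple roots:  `α1` long, `α2` short -/
def simple : Fin 2 → (Fin 2 → ℝ) := ![![-(3/2), s3/2], ![1, 0]]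

/-- the vectors of values `(α1(ξ_i), α2(ξ_i))` of the three generic linear residual
points `ξ_1, ξ_2, ξ_3` of `G2` -/
def vals : Fin 3 → (ℝ × ℝ) → (Fin 2 → ℝ) :=
  ![fun k => ![k.1, k.2],
    fun k => ![k.1, k.2 - k.1],
    fun k => ![k.1, (k.2 - k.1) / 2]]

/-- the regular parameter conditions defining `K^reg_{ξ_1}, K^reg_{ξ_2}, K^reg_{ξ_3}` -/
def regCond : Fin 3 → ℝ → ℝ → Prop :=
  ![fun k1 k2 => (k1 + 2*k2) * (2*k1 + 3*k2) ≠ 0,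
    fun k1 k2 => (k1 - 2*k2) * (2*k1 - 3*k2) ≠ 0,
    fun k1 k2 => k1 * k2 ≠ 0]

lemma s3_sq : s3 * s3 = 3 := Real.mul_self_sqrt (by norm_num)

lemma s3_ne : s3 ≠ 0 := by
  intro h
  have := s3_sq
  rw [h] at this
  norm_num at this

/-- value of the long simple root -/
def va (v : Fin 2 → ℝ) : ℝ := -(3/2) * v 0 + s3/2 * v 1

/-- value of the short simple root -/
def vb (v : Fin 2 → ℝ) : ℝ := v 0

/-- coefficients of the roots with respect to the simple roots -/
def cf : Fin 12 → ℤ × ℤ :=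
  ![(0,1), (0,-1), (1,2), (-1,-2), (1,1), (-1,-1), (1,0), (-1,0), (1,3), (-1,-3), (2,3), (-2,-3)]

/-- enumeration of the roots -/
def rt (i : Fin 12) : Fin 2 → ℝ :=
  ![-(3/2) * ((cf i).1 : ℝ) + ((cf i).2 : ℝ), s3/2 * ((cf i).1 : ℝ)]

lemma rt_inj : Function.Injective rt := by
  intro i j h
  have h0 := congrFun h 0
  have h1 := congrFun h 1
  simp only [rt, Matrix.cons_val_zero, Matrix.cons_val_one] at h0 h1
  have e1 : ((cf i).1 : ℝ) = (cf j).1 :=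
    mul_left_cancel₀ (div_ne_zero s3_ne two_ne_zero) h1
  have e2 : ((cf i).2 : ℝ) = (cf j).2 := by rw [e1] at h0; linarith
  have e : cf i = cf j := Prod.ext (by exact_mod_cast e1) (by exact_mod_cast e2)
  have hc : Function.Injective cf := by decide
  exact hc e

lemma roots_eq : roots = Set.range rt := by
  have h : ∀ x, x ∈ Set.range rt ↔ ∃ i, rt i = x := fun x => Iff.rfl
  ext x
  rw [h]
  simp only [roots, Set.mem_insert_iff, Set.mem_singleton_iff, Fin.exists_fin_succ, rt, cf]
  simp only [Fin.isValue, Matrix.cons_val_zero, Matrix.cons_val_succ, Fin.succ_zero_eq_one,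
    IsEmpty.exists_iff, or_false]
  norm_num
  simp only [eq_comm (b := x)]

lemma eval_rt (i : Fin 12) (v : Fin 2 → ℝ) :
    eval (rt i) v = (cf i).1 * va v + (cf i).2 * vb v := by
  simp [eval, rt, va, vb, Fin.sum_univ_two]
  ring

lemma short_rt (i : Fin 12) : isShort (rt i) ↔ (cf i).1 ^ 2 * 3 - 3 * (cf i).1 * (cf i).2 + (cf i).2 ^ 2 = 1 := by
  have : ∑ t, rt i t ^ 2 =
      (((cf i).1 ^ 2 * 3 - 3 * (cf i).1 * (cf i).2 + (cf i).2 ^ 2 : ℤ) : ℝ) := by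
    simp [rt, Fin.sum_univ_two]
    linear_combination ((cf i).1 : ℝ)^2 / 4 * s3_sq
  rw [isShort, this]
  norm_cast

lemma ncard_roots (p : (Fin 2 → ℝ) → Prop) :
    {α ∈ roots | p α}.ncard = ∑ i : Fin 12, if p (rt i) then 1 else 0 := by
  have : {α ∈ roots | p α} = rt '' ((Finset.univ.filter fun i => p (rt i) : Finset (Fin 12)) : Set (Fin 12)) := by
    ext x
    simp only [roots_eq, Set.mem_ofPred_eq, Set.mem_range, Set.mem_image, Finset.coe_filter,
      Finset.mem_univ, true_and]
    constructor
    · rintro ⟨⟨i, rfl⟩, h⟩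
      exact ⟨i, h, rfl⟩
    · rintro ⟨i, h, rfl⟩
      exact ⟨⟨i, rfl⟩, h⟩
  rw [this, Set.ncard_image_of_injective _ rt_inj, Set.ncard_coe_finset, Finset.card_filter]

/-- indicator -/
def ind (p : Prop) : ℕ := if p then 1 else 0

lemma ind_congr {p q : Prop} (h : p ↔ q) : ind p = ind q := by rw [propext h]

lemma ind_le (p : Prop) : ind p ≤ 1 := by unfold ind; split_ifs <;> simp

lemma ind_zero {p : Prop} (h : ¬ p) : ind p = 0 := if_neg h

lemma ind_one {p : Prop} (h : p) : ind p = 1 := if_pos h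

lemma ind_eq_zero {p : Prop} : ind p = 0 ↔ ¬ p := by unfold ind; split_ifs <;> simp_all

lemma ind_pair {p q r : Prop} (h : p → q → r) : ind p + ind q ≤ 1 + ind r := by
  unfold ind
  split_ifs <;> first | omega | (exfalso; tauto)

lemma ind_excl {p q : Prop} (h : p → q → False) : ind p + ind q ≤ 1 := by
  unfold ind
  split_ifs <;> first | omega | (exfalso; tauto)

lemma residual_iff (k1 k2 : ℝ) (v : Fin 2 → ℝ) : IsResidual k1 k2 v ↔
    ind (vb v = k2) + ind (-vb v = k2) + ind (va v + 2 * vb v = k2) + ind (-(va v + 2 * vb v) = k2)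
    + ind (va v + vb v = k2) + ind (-(va v + vb v) = k2)
    + ind (va v = k1) + ind (-va v = k1) + ind (va v + 3 * vb v = k1) + ind (-(va v + 3 * vb v) = k1)
    + ind (2 * va v + 3 * vb v = k1) + ind (-(2 * va v + 3 * vb v) = k1)
    = 2 * (ind (vb v = 0) + ind (va v + 2 * vb v = 0) + ind (va v + vb v = 0)
      + ind (va v = 0) + ind (va v + 3 * vb v = 0) + ind (2 * va v + 3 * vb v = 0)) + 2 := by
  have hs : ∀ i, par k1 k2 (rt i) = if (cf i).1 ^ 2 * 3 - 3 * (cf i).1 * (cf i).2 + (cf i).2 ^ 2 = 1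
      then k2 else k1 := by
    intro i
    simp only [par, short_rt]
  have hsum : ∀ f : Fin 12 → ℕ, ∑ i, f i = f 0 + f 1 + f 2 + f 3 + f 4 + f 5 + f 6 + f 7 + f 8 + f 9
      + f 10 + f 11 := by
    intro f; simp only [Fin.sum_univ_castSucc, Fin.sum_univ_zero, zero_add]; rfl
  have E0 : eval (rt 0) v = vb v := by
    rw [eval_rt, show cf 0 = (0, 1) from rfl]; push_cast; ring
  have S0 : par k1 k2 (rt 0) = k2 := by
    rw [hs, show cf 0 = (0, 1) from rfl]; norm_num
  have E1 : eval (rt 1) v = -(vb v) := by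
    rw [eval_rt, show cf 1 = (0, -1) from rfl]; push_cast; ring
  have S1 : par k1 k2 (rt 1) = k2 := by
    rw [hs, show cf 1 = (0, -1) from rfl]; norm_num
  have E2 : eval (rt 2) v = va v + 2 * vb v := by
    rw [eval_rt, show cf 2 = (1, 2) from rfl]; push_cast; ring
  have S2 : par k1 k2 (rt 2) = k2 := by
    rw [hs, show cf 2 = (1, 2) from rfl]; norm_num
  have E3 : eval (rt 3) v = -(va v + 2 * vb v) := by
    rw [eval_rt, show cf 3 = (-1, -2) from rfl]; push_cast; ring
  have S3 : par k1 k2 (rt 3) = k2 := by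
    rw [hs, show cf 3 = (-1, -2) from rfl]; norm_num
  have E4 : eval (rt 4) v = va v + vb v := by
    rw [eval_rt, show cf 4 = (1, 1) from rfl]; push_cast; ring
  have S4 : par k1 k2 (rt 4) = k2 := by
    rw [hs, show cf 4 = (1, 1) from rfl]; norm_num
  have E5 : eval (rt 5) v = -(va v + vb v) := by
    rw [eval_rt, show cf 5 = (-1, -1) from rfl]; push_cast; ring
  have S5 : par k1 k2 (rt 5) = k2 := by
    rw [hs, show cf 5 = (-1, -1) from rfl]; norm_num
  have E6 : eval (rt 6) v = va v := by
    rw [eval_rt, show cf 6 = (1, 0) from rfl]; push_cast; ring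
  have S6 : par k1 k2 (rt 6) = k1 := by
    rw [hs, show cf 6 = (1, 0) from rfl]; norm_num
  have E7 : eval (rt 7) v = -(va v) := by
    rw [eval_rt, show cf 7 = (-1, 0) from rfl]; push_cast; ring
  have S7 : par k1 k2 (rt 7) = k1 := by
    rw [hs, show cf 7 = (-1, 0) from rfl]; norm_num
  have E8 : eval (rt 8) v = va v + 3 * vb v := by
    rw [eval_rt, show cf 8 = (1, 3) from rfl]; push_cast; ring
  have S8 : par k1 k2 (rt 8) = k1 := by
    rw [hs, show cf 8 = (1, 3) from rfl]; norm_num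
  have E9 : eval (rt 9) v = -(va v + 3 * vb v) := by
    rw [eval_rt, show cf 9 = (-1, -3) from rfl]; push_cast; ring
  have S9 : par k1 k2 (rt 9) = k1 := by
    rw [hs, show cf 9 = (-1, -3) from rfl]; norm_num
  have E10 : eval (rt 10) v = 2 * va v + 3 * vb v := by
    rw [eval_rt, show cf 10 = (2, 3) from rfl]; push_cast; ring
  have S10 : par k1 k2 (rt 10) = k1 := by
    rw [hs, show cf 10 = (2, 3) from rfl]; norm_num
  have E11 : eval (rt 11) v = -(2 * va v + 3 * vb v) := by
    rw [eval_rt, show cf 11 = (-2, -3) from rfl]; push_cast; ring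
  have S11 : par k1 k2 (rt 11) = k1 := by
    rw [hs, show cf 11 = (-2, -3) from rfl]; norm_num
  have A : (∑ i, ind (eval (rt i) v = par k1 k2 (rt i))) =
    ind (vb v = k2) + ind (-vb v = k2) + ind (va v + 2 * vb v = k2) + ind (-(va v + 2 * vb v) = k2)
    + ind (va v + vb v = k2) + ind (-(va v + vb v) = k2)
    + ind (va v = k1) + ind (-va v = k1) + ind (va v + 3 * vb v = k1) + ind (-(va v + 3 * vb v) = k1)
    + ind (2 * va v + 3 * vb v = k1) + ind (-(2 * va v + 3 * vb v) = k1) := by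
    rw [hsum, E0, E1, E2, E3, E4, E5, E6, E7, E8, E9, E10, E11, S0, S1, S2, S3, S4, S5, S6, S7,
      S8, S9, S10, S11]
  have B : (∑ i, ind (eval (rt i) v = 0)) = 2 * (ind (vb v = 0) + ind (va v + 2 * vb v = 0)
      + ind (va v + vb v = 0)
      + ind (va v = 0) + ind (va v + 3 * vb v = 0) + ind (2 * va v + 3 * vb v = 0)) := by
    rw [hsum, E0, E1, E2, E3, E4, E5, E6, E7, E8, E9, E10, E11]
    simp only [neg_eq_zero]
    ring
  rw [IsResidual, ncard_roots, ncard_roots, ← A, ← B]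
  rfl

lemma reg0 (k1 k2 : ℝ) (v : Fin 2 → ℝ) (ha : va v = k1) (hb : vb v = k2) :
    IsResidual k1 k2 v ↔ (k1 + 2*k2) * (2*k1 + 3*k2) ≠ 0 := by
  rw [residual_iff, ha, hb, mul_ne_zero_iff, Ne, Ne, ← ind_eq_zero, ← ind_eq_zero,
    ind_one (p := k2 = k2) rfl, ind_one (p := k1 = k1) rfl,
    ind_congr (p := -k2 = k2) (q := k2 = 0) (by constructor <;> intro h <;> linarith),
    ind_congr (p := k1 + 2 * k2 = k2) (q := k1 + k2 = 0) (by constructor <;> intro h <;> linarith),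
    ind_congr (p := -(k1 + 2 * k2) = k2) (q := k1 + 3 * k2 = 0)
      (by constructor <;> intro h <;> linarith),
    ind_congr (p := k1 + k2 = k2) (q := k1 = 0) (by constructor <;> intro h <;> linarith),
    ind_congr (p := -(k1 + k2) = k2) (q := k1 + 2 * k2 = 0)
      (by constructor <;> intro h <;> linarith),
    ind_congr (p := -k1 = k1) (q := k1 = 0) (by constructor <;> intro h <;> linarith),
    ind_congr (p := k1 + 3 * k2 = k1) (q := k2 = 0) (by constructor <;> intro h <;> linarith),
    ind_congr (p := -(k1 + 3 * k2) = k1) (q := 2 * k1 + 3 * k2 = 0)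
      (by constructor <;> intro h <;> linarith),
    ind_congr (p := 2 * k1 + 3 * k2 = k1) (q := k1 + 3 * k2 = 0)
      (by constructor <;> intro h <;> linarith),
    ind_congr (p := -(2 * k1 + 3 * k2) = k1) (q := k1 + k2 = 0)
      (by constructor <;> intro h <;> linarith)]
  omega

lemma reg1 (k1 k2 : ℝ) (v : Fin 2 → ℝ) (ha : va v = k1) (hb : vb v = k2 - k1) :
    IsResidual k1 k2 v ↔ (k1 - 2*k2) * (2*k1 - 3*k2) ≠ 0 := by
  rw [residual_iff, ha, hb, mul_ne_zero_iff, Ne, Ne, ← ind_eq_zero, ← ind_eq_zero,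
    ind_one (p := k1 = k1) rfl,
    ind_one (p := k1 + (k2 - k1) = k2) (by ring),
    ind_congr (p := k2 - k1 = k2) (q := k1 = 0) (by constructor <;> intro h <;> linarith),
    ind_congr (p := -(k2 - k1) = k2) (q := k1 - 2 * k2 = 0)
      (by constructor <;> intro h <;> linarith),
    ind_congr (p := k1 + 2 * (k2 - k1) = k2) (q := k2 - k1 = 0)
      (by constructor <;> intro h <;> linarith),
    ind_congr (p := -(k1 + 2 * (k2 - k1)) = k2) (q := k1 - 3 * k2 = 0)
      (by constructor <;> intro h <;> linarith),
    ind_congr (p := -(k1 + (k2 - k1)) = k2) (q := k2 = 0)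
      (by constructor <;> intro h <;> linarith),
    ind_congr (p := -k1 = k1) (q := k1 = 0) (by constructor <;> intro h <;> linarith),
    ind_congr (p := k1 + 3 * (k2 - k1) = k1) (q := k2 - k1 = 0)
      (by constructor <;> intro h <;> linarith),
    ind_congr (p := -(k1 + 3 * (k2 - k1)) = k1) (q := k1 - 3 * k2 = 0)
      (by constructor <;> intro h <;> linarith),
    ind_congr (p := 2 * k1 + 3 * (k2 - k1) = k1) (q := 2 * k1 - 3 * k2 = 0)
      (by constructor <;> intro h <;> linarith),
    ind_congr (p := -(2 * k1 + 3 * (k2 - k1)) = k1) (q := k2 = 0)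
      (by constructor <;> intro h <;> linarith),
    ind_congr (p := k1 + 2 * (k2 - k1) = 0) (q := k1 - 2 * k2 = 0)
      (by constructor <;> intro h <;> linarith),
    ind_congr (p := k1 + (k2 - k1) = 0) (q := k2 = 0)
      (by constructor <;> intro h <;> linarith),
    ind_congr (p := k1 + 3 * (k2 - k1) = 0) (q := 2 * k1 - 3 * k2 = 0)
      (by constructor <;> intro h <;> linarith),
    ind_congr (p := 2 * k1 + 3 * (k2 - k1) = 0) (q := k1 - 3 * k2 = 0)
      (by constructor <;> intro h <;> linarith)]
  omega

lemma reg2 (k1 k2 : ℝ) (v : Fin 2 → ℝ) (ha : va v = k1) (hb : vb v = (k2 - k1) / 2) :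
    IsResidual k1 k2 v ↔ k1 * k2 ≠ 0 := by
  obtain ⟨c, hc⟩ : ∃ c, c = (k2 - k1) / 2 := ⟨_, rfl⟩
  have hk : k2 = k1 + 2 * c := by linarith
  rw [← hc] at hb
  subst hk
  rw [residual_iff, ha, hb, mul_ne_zero_iff, Ne, Ne, ← ind_eq_zero, ← ind_eq_zero,
    ind_one (p := k1 = k1) rfl,
    ind_one (p := k1 + 2 * c = k1 + 2 * c) rfl,
    ind_congr (p := c = k1 + 2 * c) (q := k1 + c = 0) (by constructor <;> intro h <;> linarith),
    ind_congr (p := -c = k1 + 2 * c) (q := k1 + 3 * c = 0)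
      (by constructor <;> intro h <;> linarith),
    ind_congr (p := -(k1 + 2 * c) = k1 + 2 * c) (q := k1 + 2 * c = 0)
      (by constructor <;> intro h <;> linarith),
    ind_congr (p := k1 + c = k1 + 2 * c) (q := c = 0)
      (by constructor <;> intro h <;> linarith),
    ind_congr (p := -(k1 + c) = k1 + 2 * c) (q := 2 * k1 + 3 * c = 0)
      (by constructor <;> intro h <;> linarith),
    ind_congr (p := -k1 = k1) (q := k1 = 0) (by constructor <;> intro h <;> linarith),
    ind_congr (p := k1 + 3 * c = k1) (q := c = 0)
      (by constructor <;> intro h <;> linarith),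
    ind_congr (p := -(k1 + 3 * c) = k1) (q := 2 * k1 + 3 * c = 0)
      (by constructor <;> intro h <;> linarith),
    ind_congr (p := 2 * k1 + 3 * c = k1) (q := k1 + 3 * c = 0)
      (by constructor <;> intro h <;> linarith),
    ind_congr (p := -(2 * k1 + 3 * c) = k1) (q := k1 + c = 0)
      (by constructor <;> intro h <;> linarith)]
  omega

lemma three_vals (x y κ : ℝ) (hκ : κ ≠ 0)
    (h : ind (x = κ) + ind (-x = κ) + ind (y = κ) + ind (-y = κ) + ind (x + y = κ) + ind (-(x+y) = κ)
      = 2 * (ind (x = 0) + ind (y = 0) + ind (x + y = 0) + ind (x - y = 0) + ind (x + 2 * y = 0)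
        + ind (2 * x + y = 0)) + 2) : False := by
  have e1 := ind_excl (p := x = κ) (q := -x = κ) (by clear * - hκ; intro _ _; apply hκ; linarith)
  have e2 := ind_excl (p := y = κ) (q := -y = κ) (by clear * - hκ; intro _ _; apply hκ; linarith)
  have e3 := ind_excl (p := x + y = κ) (q := -(x + y) = κ) (by clear * - hκ; intro _ _; apply hκ; linarith)
  have a1 := ind_pair (p := x = κ) (q := y = κ) (r := x - y = 0) (by clear * -; intro _ _; linarith)
  have a2 := ind_pair (p := -x = κ) (q := -y = κ) (r := x - y = 0) (by clear * -; intro _ _; linarith)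
  have a3 := ind_pair (p := x = κ) (q := -y = κ) (r := x + y = 0) (by clear * -; intro _ _; linarith)
  have a4 := ind_pair (p := -x = κ) (q := y = κ) (r := x + y = 0) (by clear * -; intro _ _; linarith)
  have b1 := ind_pair (p := x = κ) (q := x + y = κ) (r := y = 0) (by clear * -; intro _ _; linarith)
  have b2 := ind_pair (p := -x = κ) (q := -(x + y) = κ) (r := y = 0) (by clear * -; intro _ _; linarith)
  have b3 := ind_pair (p := x = κ) (q := -(x + y) = κ) (r := 2 * x + y = 0) (by clear * -; intro _ _; linarith)
  have b4 := ind_pair (p := -x = κ) (q := x + y = κ) (r := 2 * x + y = 0) (by clear * -; intro _ _; linarith)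
  have c1 := ind_pair (p := y = κ) (q := x + y = κ) (r := x = 0) (by clear * -; intro _ _; linarith)
  have c2 := ind_pair (p := -y = κ) (q := -(x + y) = κ) (r := x = 0) (by clear * -; intro _ _; linarith)
  have c3 := ind_pair (p := y = κ) (q := -(x + y) = κ) (r := x + 2 * y = 0) (by clear * -; intro _ _; linarith)
  have c4 := ind_pair (p := -y = κ) (q := x + y = κ) (r := x + 2 * y = 0) (by clear * -; intro _ _; linarith)
  generalize ind (x = κ) = n0 at *
  generalize ind (-x = κ) = n1 at *
  generalize ind (y = κ) = n2 at *
  generalize ind (-y = κ) = n3 at *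
  generalize ind (x + y = κ) = n4 at *
  generalize ind (-(x+y) = κ) = n5 at *
  generalize ind (x = 0) = n6 at *
  generalize ind (y = 0) = n7 at *
  generalize ind (x + y = 0) = n8 at *
  generalize ind (x - y = 0) = n9 at *
  generalize ind (x + 2 * y = 0) = n10 at *
  generalize ind (2 * x + y = 0) = n11 at *
  have tri : ∀ m n : ℕ, m + n ≤ 1 → (m = 0 ∧ n = 0) ∨ (m = 1 ∧ n = 0) ∨ (m = 0 ∧ n = 1) := by
    clear * -; intro m n h; omega
  rcases tri _ _ e1 with ⟨rfl, rfl⟩ | ⟨rfl, rfl⟩ | ⟨rfl, rfl⟩ <;>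
  rcases tri _ _ e2 with ⟨rfl, rfl⟩ | ⟨rfl, rfl⟩ | ⟨rfl, rfl⟩ <;>
  rcases tri _ _ e3 with ⟨rfl, rfl⟩ | ⟨rfl, rfl⟩ | ⟨rfl, rfl⟩ <;>
  linarith

lemma exists_short {k1 k2 : ℝ} {v : Fin 2 → ℝ} (h1 : k1 ≠ 0) (h : IsResidual k1 k2 v) :
    vb v = k2 ∨ -vb v = k2 ∨ va v + 2 * vb v = k2 ∨ -(va v + 2 * vb v) = k2 ∨
      va v + vb v = k2 ∨ -(va v + vb v) = k2 := by
  by_contra hn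
  push Not at hn
  obtain ⟨n1, n2, n3, n4, n5, n6⟩ := hn
  rw [residual_iff, ind_zero n1, ind_zero n2, ind_zero n3, ind_zero n4, ind_zero n5,
    ind_zero n6] at h
  apply three_vals (va v) (va v + 3 * vb v) k1 h1
  rw [show va v + (va v + 3 * vb v) = 2 * va v + 3 * vb v by ring,
    ind_congr (p := va v - (va v + 3 * vb v) = 0) (q := vb v = 0)
      (by constructor <;> intro h <;> linarith),
    ind_congr (p := va v + 2 * (va v + 3 * vb v) = 0) (q := va v + 2 * vb v = 0)
      (by constructor <;> intro h <;> linarith),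
    ind_congr (p := 2 * va v + (va v + 3 * vb v) = 0) (q := va v + vb v = 0)
      (by constructor <;> intro h <;> linarith)]
  omega

lemma exists_long {k1 k2 : ℝ} {v : Fin 2 → ℝ} (h2 : k2 ≠ 0) (h : IsResidual k1 k2 v) :
    va v = k1 ∨ -va v = k1 ∨ va v + 3 * vb v = k1 ∨ -(va v + 3 * vb v) = k1 ∨
      2 * va v + 3 * vb v = k1 ∨ -(2 * va v + 3 * vb v) = k1 := by
  by_contra hn
  push Not at hn
  obtain ⟨n1, n2, n3, n4, n5, n6⟩ := hn
  rw [residual_iff, ind_zero n1, ind_zero n2, ind_zero n3, ind_zero n4, ind_zero n5,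
    ind_zero n6] at h
  apply three_vals (vb v) (va v + vb v) k2 h2
  rw [show vb v + (va v + vb v) = va v + 2 * vb v by ring,
    ind_congr (p := vb v - (va v + vb v) = 0) (q := va v = 0)
      (by constructor <;> intro h <;> linarith),
    show vb v + 2 * (va v + vb v) = 2 * va v + 3 * vb v by ring,
    show 2 * vb v + (va v + vb v) = va v + 3 * vb v by ring]
  omega

lemma dense_ne (L : (ℝ × ℝ) →ₗ[ℝ] ℝ) (h : L ≠ 0) :
    IsOpen {k | L k ≠ 0} ∧ Dense {k | L k ≠ 0} := by
  have hc : Continuous L := L.continuous_of_finiteDimensional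
  refine ⟨isOpen_ne_fun hc continuous_const, ?_⟩
  have : {k | L k ≠ 0} = ((LinearMap.ker L : Submodule ℝ (ℝ × ℝ)) : Set (ℝ × ℝ))ᶜ := by
    ext k; simp
  rw [this, ← interior_eq_empty_iff_dense_compl]
  by_contra hne
  have := Submodule.eq_top_of_nonempty_interior' _ (Set.nonempty_iff_ne_empty.mpr hne)
  exact h (LinearMap.ker_eq_top.mp this)

lemma generic_point {ι : Type} [Countable ι] (L : ι → (ℝ × ℝ) →ₗ[ℝ] ℝ) (U : Set (ℝ × ℝ))
    (hU : IsOpen U) (hd : Dense U) : ∃ k ∈ U, ∀ i, L i k = 0 → ∀ q, L i q = 0 := by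
  let S : ι → Set (ℝ × ℝ) := fun i => if L i = 0 then Set.univ else {k | L i k ≠ 0}
  have hS : ∀ i, IsOpen (S i) ∧ Dense (S i) := by
    intro i
    by_cases h : L i = 0
    · simp [S, h]
    · simpa only [S, if_neg h] using dense_ne _ h
  have hD : Dense (⋂ i, S i) := dense_iInter_of_isOpen (fun i => (hS i).1) (fun i => (hS i).2)
  obtain ⟨k, hk, hkU⟩ := hD.inter_open_nonempty U hU hd.nonempty
  refine ⟨k, hk, fun i h0 q => ?_⟩
  have := Set.mem_iInter.mp hkU i
  by_cases h : L i = 0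
  · simp [h]
  · simp only [S, if_neg h] at this
    exact absurd h0 this

/-- linear form -/
def lf (p q : ℝ) : (ℝ × ℝ) →ₗ[ℝ] ℝ := p • LinearMap.fst ℝ ℝ ℝ + q • LinearMap.snd ℝ ℝ ℝ

lemma lf_apply (p q : ℝ) (k : ℝ × ℝ) : lf p q k = p * k.1 + q * k.2 := by simp [lf]

lemma generic_of (η : (ℝ × ℝ) →ₗ[ℝ] (Fin 2 → ℝ)) (p q r s : ℝ) (h1 : p ≠ 0 ∨ q ≠ 0)
    (h2 : r ≠ 0 ∨ s ≠ 0)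
    (h : ∀ k : ℝ × ℝ, (p * k.1 + q * k.2) * (r * k.1 + s * k.2) ≠ 0 → IsResidual k.1 k.2 (η k)) :
    IsGenericResidual η := by
  have key : ∀ p q : ℝ, (p ≠ 0 ∨ q ≠ 0) → lf p q ≠ 0 := by
    intro p q h0 he
    have e1 := lf_apply p q (1, 0)
    have e2 := lf_apply p q (0, 1)
    rw [he] at e1 e2
    simp at e1 e2
    rcases h0 with h0 | h0
    · exact h0 e1.symm
    · exact h0 e2.symm
  obtain ⟨o1, d1⟩ := dense_ne _ (key p q h1)
  obtain ⟨o2, d2⟩ := dense_ne _ (key r s h2)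
  refine ⟨_, o1.inter o2, d1.inter_of_isOpen_left d2 o1, fun k hk => h k ?_⟩
  have e1 := hk.1
  have e2 := hk.2
  simp only [Set.mem_ofPred_eq, lf_apply] at e1 e2
  exact mul_ne_zero e1 e2

/-- squared norm -/
def nsq (v : Fin 2 → ℝ) : ℝ := eval v v

lemma eval_two (u v : Fin 2 → ℝ) : eval u v = u 0 * v 0 + u 1 * v 1 := by
  simp [eval, Fin.sum_univ_two]

lemma nsq_reflect (α v : Fin 2 → ℝ) : nsq (reflectBy α v) = nsq v := by
  have key : ∀ c : ℝ, nsq (v - c • α) = nsq v - 2 * c * eval α v + c ^ 2 * eval α α := by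
    intro c
    simp only [nsq, eval_two, Pi.sub_apply, Pi.smul_apply, smul_eq_mul]
    ring
  rw [reflectBy, key]
  by_cases h : eval α α = 0
  · simp [h]
  · field_simp
    ring

lemma nsq_weyl {f : (Fin 2 → ℝ) → (Fin 2 → ℝ)} (hf : InWeyl f) (v : Fin 2 → ℝ) :
    nsq (f v) = nsq v := by
  obtain ⟨L, -, rfl⟩ := hf
  induction L with
  | nil => rfl
  | cons a L ih =>
    rw [List.foldr_cons, Function.comp_apply, nsq_reflect, ih]

lemma nsq_ab (v : Fin 2 → ℝ) : nsq v = vb v ^ 2 + (2 * va v + 3 * vb v) ^ 2 / 3 := by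
  simp only [nsq, eval_two, va, vb]
  linear_combination (-(v 1 ^ 2) / 3) * s3_sq

lemma ext_ab {v w : Fin 2 → ℝ} (ha : va v = va w) (hb : vb v = vb w) : v = w := by
  have h0 : v 0 = w 0 := hb
  have h1 : v 1 = w 1 := by
    simp only [va, h0] at ha
    exact mul_left_cancel₀ (div_ne_zero s3_ne two_ne_zero) (by linarith)
  ext t
  fin_cases t
  · exact h0
  · exact h1

/-- the pair of functions `(a, b)` of simple root values belongs to the orbit of some `ξ i` -/
def P (ξ : Fin 3 → ((ℝ × ℝ) →ₗ[ℝ] (Fin 2 → ℝ))) (a b : ℝ × ℝ → ℝ) : Prop :=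
  ∃ i, ∃ f, InWeyl f ∧ ∀ k, va (f (ξ i k)) = a k ∧ vb (f (ξ i k)) = b k

lemma weyl_id : InWeyl id := ⟨[], by simp, rfl⟩

lemma weyl_cons {f} (hf : InWeyl f) {α} (h : α ∈ roots) : InWeyl (reflectBy α ∘ f) := by
  obtain ⟨L, hL, rfl⟩ := hf
  refine ⟨α :: L, ?_, rfl⟩
  intro β hβ
  rcases List.mem_cons.mp hβ with rfl | hβ
  · exact h
  · exact hL _ hβ

lemma P_s1 {ξ a b} (h : P ξ (fun k => -a k) (fun k => a k + b k)) : P ξ a b := by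
  obtain ⟨i, f, hf, h⟩ := h
  refine ⟨i, _, weyl_cons hf (α := ![-(3/2), s3/2]) (by simp [roots]), fun k => ?_⟩
  obtain ⟨h1, h2⟩ := h k
  set w := f (ξ i k)
  have e : eval ![-(3/2), s3/2] w = va w := by simp [eval_two, va]
  have e' : eval ![-(3/2), s3/2] ![-(3/2), s3/2] = 3 := by
    simp [eval_two]; linear_combination s3_sq / 4
  have ea : va (w - (2 * va w / 3) • ![-(3/2), s3/2]) = - va w := by
    simp [va]; linear_combination (w 0 / 4 - s3 * w 1 / 12) * s3_sq
  have eb : vb (w - (2 * va w / 3) • ![-(3/2), s3/2]) = va w + vb w := by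
    simp [vb]; ring
  simp only [Function.comp_apply, reflectBy]
  rw [e, e', ea, eb, h1, h2]
  constructor <;> ring

lemma P_s2 {ξ a b} (h : P ξ (fun k => a k + 3 * b k) (fun k => -b k)) : P ξ a b := by
  obtain ⟨i, f, hf, h⟩ := h
  refine ⟨i, _, weyl_cons hf (α := ![1, 0]) (by simp [roots]), fun k => ?_⟩
  obtain ⟨h1, h2⟩ := h k
  set w := f (ξ i k)
  have e : eval ![1, 0] w = vb w := by simp [eval_two, vb]
  have e' : eval ![1, 0] ![1, 0] = 1 := by
    simp [eval_two]
  have ea : va (w - (2 * vb w / 1) • ![1, 0]) = va w + 3 * vb w := by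
    simp [va, vb]; ring
  have eb : vb (w - (2 * vb w / 1) • ![1, 0]) = - vb w := by
    simp [vb]; ring
  simp only [Function.comp_apply, reflectBy]
  rw [e, e', ea, eb, h1, h2]
  constructor <;> ring

/-- the hypothesis on the `ξ i` in terms of `va`, `vb` -/
def Good (ξ : Fin 3 → ((ℝ × ℝ) →ₗ[ℝ] (Fin 2 → ℝ))) : Prop :=
  ∀ k, (va (ξ 0 k) = k.1 ∧ vb (ξ 0 k) = k.2) ∧ (va (ξ 1 k) = k.1 ∧ vb (ξ 1 k) = k.2 - k.1) ∧
    (va (ξ 2 k) = k.1 ∧ vb (ξ 2 k) = (k.2 - k.1) / 2)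

/-- some short root takes the value `k2` identically -/
def ShortEq (a b : ℝ × ℝ → ℝ) : Prop :=
  (∀ k, b k = k.2) ∨ (∀ k, -b k = k.2) ∨ (∀ k, a k + 2 * b k = k.2) ∨
    (∀ k, -(a k + 2 * b k) = k.2) ∨ (∀ k, a k + b k = k.2) ∨ (∀ k, -(a k + b k) = k.2)

lemma short_s1 {a b} (h : ShortEq a b) : ShortEq (fun k => -a k) (fun k => a k + b k) := by
  rcases h with h | h | h | h | h | h
  · right; right; right; right; left; intro k; linarith [h k]
  · right; right; right; right; right; intro k; linarith [h k]
  · right; right; left; intro k; linarith [h k]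
  · right; right; right; left; intro k; linarith [h k]
  · left; intro k; linarith [h k]
  · right; left; intro k; linarith [h k]

lemma short_s2 {a b} (h : ShortEq a b) : ShortEq (fun k => a k + 3 * b k) (fun k => -b k) := by
  rcases h with h | h | h | h | h | h
  · right; left; intro k; linarith [h k]
  · left; intro k; linarith [h k]
  · right; right; right; right; left; intro k; linarith [h k]
  · right; right; right; right; right; intro k; linarith [h k]
  · right; right; left; intro k; linarith [h k]
  · right; right; right; left; intro k; linarith [h k]

lemma P_perp {ξ a b} (h : P ξ a (fun k => -(a k + b k))) : P ξ a b := by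
  apply P_s2
  apply P_s1
  apply P_s2
  apply P_s1
  apply P_s2
  convert h using 2 <;> ring

lemma P_base {ξ a b} (hξ : Good ξ) (ha : ∀ k, a k = k.1) (h : ShortEq a b) : P ξ a b := by
  have b0 : ∀ b : ℝ × ℝ → ℝ, (∀ k, b k = k.2) → P ξ a b := fun b hb =>
    ⟨0, id, weyl_id, fun k => ⟨by simpa [ha] using (hξ k).1.1, by simpa [hb] using (hξ k).1.2⟩⟩
  have b1 : ∀ b : ℝ × ℝ → ℝ, (∀ k, a k + b k = k.2) → P ξ a b := fun b hb =>
    ⟨1, id, weyl_id, fun k => ⟨by simpa [ha] using (hξ k).2.1.1,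
      by have := (hξ k).2.1.2; have := hb k; have := ha k; simp only [id]; linarith⟩⟩
  have b2 : ∀ b : ℝ × ℝ → ℝ, (∀ k, a k + 2 * b k = k.2) → P ξ a b := fun b hb =>
    ⟨2, id, weyl_id, fun k => ⟨by simpa [ha] using (hξ k).2.2.1,
      by have := (hξ k).2.2.2; have := hb k; have := ha k; simp only [id]; linarith⟩⟩
  rcases h with h | h | h | h | h | h
  · exact b0 b h
  · exact P_perp (b1 _ fun k => by linarith [h k])
  · exact b2 b h
  · exact P_perp (b2 _ fun k => by linarith [h k])
  · exact b1 b h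
  · exact P_perp (b0 _ h)

lemma P_l1 {ξ a b} (hξ : Good ξ) (ha : ∀ k, -a k = k.1) (h : ShortEq a b) : P ξ a b :=
  P_s1 (P_base hξ ha (short_s1 h))

lemma P_l2 {ξ a b} (hξ : Good ξ) (ha : ∀ k, a k + 3 * b k = k.1) (h : ShortEq a b) : P ξ a b :=
  P_s2 (P_base hξ ha (short_s2 h))

lemma P_l3 {ξ a b} (hξ : Good ξ) (ha : ∀ k, -(a k + 3 * b k) = k.1) (h : ShortEq a b) : P ξ a b :=
  P_s2 (P_l1 hξ ha (short_s2 h))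

lemma P_l4 {ξ a b} (hξ : Good ξ) (ha : ∀ k, 2 * a k + 3 * b k = k.1) (h : ShortEq a b) : P ξ a b :=
  P_s1 (P_l2 hξ (fun k => by linarith [ha k]) (short_s1 h))

lemma P_l5 {ξ a b} (hξ : Good ξ) (ha : ∀ k, -(2 * a k + 3 * b k) = k.1) (h : ShortEq a b) :
    P ξ a b :=
  P_s1 (P_l3 hξ (fun k => by linarith [ha k]) (short_s1 h))

/-- a linear combination of the simple root values minus a linear form -/
def rel (η : (ℝ × ℝ) →ₗ[ℝ] (Fin 2 → ℝ)) (c : (ℤ × ℤ) × (ℤ × ℤ)) : (ℝ × ℝ) →ₗ[ℝ] ℝ where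
  toFun k := c.1.1 * va (η k) + c.1.2 * vb (η k) - (c.2.1 * k.1 + c.2.2 * k.2)
  map_add' x y := by simp [va, vb]; ring
  map_smul' m x := by simp [va, vb]; ring

lemma rel_apply (η : (ℝ × ℝ) →ₗ[ℝ] (Fin 2 → ℝ)) (x y z w : ℤ) (k) :
    rel η ((x, y), (z, w)) k = x * va (η k) + y * vb (η k) - (z * k.1 + w * k.2) := rfl

lemma exists_orbit {ξ} (hξ : Good ξ) (η : (ℝ × ℝ) →ₗ[ℝ] (Fin 2 → ℝ)) (h : IsGenericResidual η) :
    ∃ i, GenSameOrbit (ξ i) η := by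
  obtain ⟨U, hU, hd, hres⟩ := h
  obtain ⟨k, hk, hg⟩ := generic_point (rel η) U hU hd
  have key : ∀ x y z w : ℤ, x * va (η k) + y * vb (η k) = z * k.1 + w * k.2 →
      ∀ q : ℝ × ℝ, x * va (η q) + y * vb (η q) = z * q.1 + w * q.2 := by
    intro x y z w h q
    have := hg ((x, y), (z, w)) (by rw [rel_apply]; linarith) q
    rw [rel_apply] at this
    linarith
  have k1 : k.1 ≠ 0 := by
    intro h
    have := key 0 0 1 0 (by simp [h]) (1, 0)
    simp at this
  have k2 : k.2 ≠ 0 := by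
    intro h
    have := key 0 0 0 1 (by simp [h]) (0, 1)
    simp at this
  have hs : ShortEq (fun q => va (η q)) (fun q => vb (η q)) := by
    rcases exists_short k1 (hres k hk) with h | h | h | h | h | h
    · left; intro q; have := key 0 1 0 1 (by push_cast; linarith) q; push_cast at this; linarith
    · right; left; intro q
      have := key 0 (-1) 0 1 (by push_cast; linarith) q; push_cast at this; linarith
    · right; right; left; intro q
      have := key 1 2 0 1 (by push_cast; linarith) q; push_cast at this; linarith
    · right; right; right; left; intro q
      have := key (-1) (-2) 0 1 (by push_cast; linarith) q; push_cast at this; linarith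
    · right; right; right; right; left; intro q
      have := key 1 1 0 1 (by push_cast; linarith) q; push_cast at this; linarith
    · right; right; right; right; right; intro q
      have := key (-1) (-1) 0 1 (by push_cast; linarith) q; push_cast at this; linarith
  have hP : P ξ (fun q => va (η q)) (fun q => vb (η q)) := by
    rcases exists_long k2 (hres k hk) with h | h | h | h | h | h
    · refine P_base hξ (fun q => ?_) hs
      have := key 1 0 1 0 (by push_cast; linarith) q; push_cast at this; linarith
    · refine P_l1 hξ (fun q => ?_) hs
      have := key (-1) 0 1 0 (by push_cast; linarith) q; push_cast at this; linarith
    · refine P_l2 hξ (fun q => ?_) hs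
      have := key 1 3 1 0 (by push_cast; linarith) q; push_cast at this; linarith
    · refine P_l3 hξ (fun q => ?_) hs
      have := key (-1) (-3) 1 0 (by push_cast; linarith) q; push_cast at this; linarith
    · refine P_l4 hξ (fun q => ?_) hs
      have := key 2 3 1 0 (by push_cast; linarith) q; push_cast at this; linarith
    · refine P_l5 hξ (fun q => ?_) hs
      have := key (-2) (-3) 1 0 (by push_cast; linarith) q; push_cast at this; linarith
  obtain ⟨i, f, hf, h⟩ := hP
  exact ⟨i, f, hf, fun q => ext_ab (h q).1.symm (h q).2.symm⟩

lemma nsq_inj {ξ} (hξ : Good ξ) (i j : Fin 3) (h : nsq (ξ i (1, 2)) = nsq (ξ j (1, 2))) :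
    i = j := by
  obtain ⟨⟨a0, b0⟩, ⟨a1, b1⟩, ⟨a2, b2⟩⟩ := hξ (1, 2)
  rw [nsq_ab, nsq_ab] at h
  fin_cases i <;> fin_cases j <;> first
    | rfl
    | (exfalso
       simp only [Fin.zero_eta, Fin.mk_one, Fin.reduceFinMk, a0, b0, a1, b1, a2, b2] at h
       norm_num at h)

/-- The three linear maps `ξ_1, ξ_2, ξ_3` (determined by their values on the simple
roots) are generic linear residual points of `G2`, lie in pairwise distinct
`W0`-orbits, every generic linear residual point of `G2` is `W0`-conjugate to exactly
one of them, and their regular parameter sets `K^reg_{ξ_i}` are as listed. -/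
theorem g2_generic_residual_classification
    (ξ : Fin 3 → ((ℝ × ℝ) →ₗ[ℝ] (Fin 2 → ℝ)))
    (hval : ∀ (i : Fin 3) (k : ℝ × ℝ) (j : Fin 2), eval (simple j) (ξ i k) = vals i k j) :
    (∀ i, IsGenericResidual (ξ i)) ∧
    (∀ i j, i ≠ j → ¬ GenSameOrbit (ξ i) (ξ j)) ∧
    (∀ η : (ℝ × ℝ) →ₗ[ℝ] (Fin 2 → ℝ), IsGenericResidual η →
      ∃! i : Fin 3, GenSameOrbit (ξ i) η) ∧
    (∀ (i : Fin 3) (k1 k2 : ℝ), IsResidual k1 k2 (ξ i (k1, k2)) ↔ regCond i k1 k2) := by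
  have hξ : Good ξ := by
    intro k
    have ea : ∀ v, eval (simple 0) v = va v := fun v => by simp [simple, eval_two, va]
    have eb : ∀ v, eval (simple 1) v = vb v := fun v => by simp [simple, eval_two, vb]
    refine ⟨⟨?_, ?_⟩, ⟨?_, ?_⟩, ⟨?_, ?_⟩⟩
    · rw [← ea, hval]; rfl
    · rw [← eb, hval]; rfl
    · rw [← ea, hval]; rfl
    · rw [← eb, hval]; rfl
    · rw [← ea, hval]; rfl
    · rw [← eb, hval]; rfl
  have hnsq : ∀ i η, GenSameOrbit (ξ i) η → ∀ k, nsq (η k) = nsq (ξ i k) := by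
    rintro i η ⟨f, hf, h⟩ k
    rw [h k, nsq_weyl hf]
  refine ⟨?_, ?_, ?_, ?_⟩
  · intro i
    fin_cases i
    · refine generic_of _ 1 2 2 3 (by norm_num) (by norm_num) fun k hk => ?_
      exact (reg0 k.1 k.2 _ (hξ k).1.1 (hξ k).1.2).mpr (by simpa using hk)
    · refine generic_of _ 1 (-2) 2 (-3) (by norm_num) (by norm_num) fun k hk => ?_
      exact (reg1 k.1 k.2 _ (hξ k).2.1.1 (hξ k).2.1.2).mpr
        (by convert hk using 2 <;> ring)
    · refine generic_of _ 1 0 0 1 (by norm_num) (by norm_num) fun k hk => ?_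
      exact (reg2 k.1 k.2 _ (hξ k).2.2.1 (hξ k).2.2.2).mpr (by simpa using hk)
  · intro i j hij h
    exact hij (nsq_inj hξ i j (hnsq i _ h (1, 2)).symm)
  · intro η hη
    obtain ⟨i, hi⟩ := exists_orbit hξ η hη
    refine ⟨i, hi, fun j hj => nsq_inj hξ j i ?_⟩
    rw [← hnsq i _ hi, ← hnsq j _ hj]
  · intro i k1 k2
    obtain ⟨⟨a0, b0⟩, ⟨a1, b1⟩, ⟨a2, b2⟩⟩ := hξ (k1, k2)
    fin_cases i
    · exact reg0 k1 k2 _ a0 b0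
    · exact reg1 k1 k2 _ a1 b1
    · exact reg2 k1 k2 _ a2 b2

end G2Res

end
end
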